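/- Let n ≥ 1, Q = 2n+2 and 1 < p < (Q+2)/(Q−2). Then the equation −Δ_H u = u^p on ℍⁿ admits no positive smooth solution; moreover, any nonnegative smooth solution of −Δ_H u = u^p on ℍⁿ must be identically zero. -/

import Mathlib

open Complex Filter Topology MeasureTheory

noncomputable section

/-- The Heisenberg group ℍⁿ as ℂⁿ × ℝ. -/
abbrev Heis (n : ℕ) := (Fin n → ℂ) × ℝ

namespace Heis

variable {n : ℕ}

/-- Hermitian inner product ⟨z,z'⟩ = Σ_j z_j conj(z'_j). -/
def hermInner (z w : Fin n → ℂ) : ℂ := ∑ j, z j * (starRingEnd ℂ) (w j)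

/-- Squared Euclidean norm |z|² = Σ_j |z_j|². -/
def nsq (z : Fin n → ℂ) : ℝ := ∑ j, Complex.normSq (z j)

/-- Group law (z,t)·(z',t') = (z+z', t+t'+2 Im⟨z,z'⟩). -/
def hmul (a b : Heis n) : Heis n :=
  (a.1 + b.1, a.2 + b.2 + 2 * (hermInner a.1 b.1).im)

/-- Group inverse: ζ⁻¹ = −ζ. -/
def hinv (a : Heis n) : Heis n := (-a.1, -a.2)

/-- Korányi norm |(z,t)|_H = (|z|⁴ + t²)^{1/4}. -/
def korNorm (a : Heis n) : ℝ := ((nsq a.1) ^ 2 + a.2 ^ 2) ^ ((1 : ℝ)/4)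

/-- Korányi distance d_H(ξ,ζ) = |ζ⁻¹·ξ|_H. -/
def dH (a b : Heis n) : ℝ := korNorm (hmul (hinv b) a)

/-- Open Korányi ball B_λ(ξ). -/
def ball (ξ : Heis n) (lam : ℝ) : Set (Heis n) := {ζ | dH ξ ζ < lam}

/-- Left translation τ_ξ. -/
def tau (ξ ζ : Heis n) : Heis n := hmul ξ ζ

/-- Dilation δ_λ(z,t) = (λz, λ²t). -/
def dil (lam : ℝ) (a : Heis n) : Heis n := (fun j => (lam : ℂ) * a.1 j, lam ^ 2 * a.2)

/-- Rotation ρ_M(z,t) = (Mz,t). -/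
def rot (M : Matrix (Fin n) (Fin n) ℂ) (a : Heis n) : Heis n := (M.mulVec a.1, a.2)

/-- Inversion ι(z,t) = (conj z, −t). -/
def iota (a : Heis n) : Heis n := (fun j => (starRingEnd ℂ) (a.1 j), -a.2)

/-- w = t + i|z|². -/
def wC (a : Heis n) : ℂ := (a.2 : ℂ) + Complex.I * ((nsq a.1 : ℝ) : ℂ)

/-- CR inversion 𝒥(z,t) = (z/w, −t/|w|²). -/
def crInv (a : Heis n) : Heis n :=
  (fun j => a.1 j / wC a, -a.2 / Complex.normSq (wC a))

/-- Angles θ_k for the rotation matrix M_{ξ,β}. -/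
def theta (ξ : Heis n) (β : ℝ) (k : Fin n) : ℝ :=
  if ξ.1 k ≠ 0 then 2 * (ξ.1 k).arg + (wC ξ + Complex.I * (β : ℂ)).arg else 0

/-- The unitary diagonal matrix M_{ξ,β} = diag(e^{iθ₁},…,e^{iθₙ}). -/
def Mmat (ξ : Heis n) (β : ℝ) : Matrix (Fin n) (Fin n) ℂ :=
  Matrix.diagonal fun k => Complex.exp (Complex.I * ((theta ξ β k : ℝ) : ℂ))

/-- Generalized CR inversion Φ_{ξ,λ}^β = τ_ξ ∘ ρ_{M_{ξ,β}} ∘ δ_{λ²} ∘ 𝒥 ∘ ι ∘ τ_ξ⁻¹. -/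
def Phi (ξ : Heis n) (lam β : ℝ) (ζ : Heis n) : Heis n :=
  tau ξ (rot (Mmat ξ β) (dil (lam ^ 2) (crInv (iota (hmul (hinv ξ) ζ)))))

/-- Direction of the vector field X_j at p. -/
def XVec (j : Fin n) (p : Heis n) : Heis n := (Pi.single j (1 : ℂ), 2 * (p.1 j).im)

/-- Direction of the vector field Y_j at p. -/
def YVec (j : Fin n) (p : Heis n) : Heis n := (Pi.single j Complex.I, -2 * (p.1 j).re)

/-- The vector field X_j acting on functions. -/
def Xop (j : Fin n) (u : Heis n → ℝ) (p : Heis n) : ℝ := fderiv ℝ u p (XVec j p)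

/-- The vector field Y_j acting on functions. -/
def Yop (j : Fin n) (u : Heis n → ℝ) (p : Heis n) : ℝ := fderiv ℝ u p (YVec j p)

/-- Sub-Laplacian Δ_H = Σ_j (X_j² + Y_j²). -/
def subLap (u : Heis n → ℝ) (p : Heis n) : ℝ :=
  ∑ j, (Xop j (Xop j u) p + Yop j (Yop j u) p)

/-- Squared length of the horizontal gradient |∇_H u|² = Σ_j ((X_j u)² + (Y_j u)²). -/
def gradHSq (u : Heis n → ℝ) (p : Heis n) : ℝ :=
  ∑ j, ((Xop j u p) ^ 2 + (Yop j u p) ^ 2)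

/-- Generalized Kelvin transform u_{ξ,λ}^β(η) = (λ/d_H(η,ξ))^{Q−2} u(Φ_{ξ,λ}^β(η)), Q−2 = 2n. -/
def kelvin (u : Heis n → ℝ) (ξ : Heis n) (lam β : ℝ) (η : Heis n) : ℝ :=
  (lam / dH η ξ) ^ (2 * n) * u (Phi ξ lam β η)

/-- The filter |ζ|_H → ∞ on ℍⁿ. -/
def atInftyH (n : ℕ) : Filter (Heis n) := Filter.comap korNorm Filter.atTop

end Heis

open Heis

/-!
For a positive solution put `u = e^{n f}`, so that the equation becomes an equation for `f`
involving `F = u^{p-1} / (4 n²)`. Let `k = n (p - 1)`; the subcritical range is `0 < k < 2`. A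
Bochner-type identity in the manner of Jerison–Lee, due to Ma and Ou, exhibits a vector field whose
divergence is a sum of squares of CR-invariant tensors of `f` plus `k (2 - k)` times a coercive
quantity, all with the weight `e^{(2n-2) f}`. Multiplying the field by a power of a cutoff
adapted to the box of radius `R`, and correcting it by a term that absorbs `T f`, leaves an error
which Young's inequality bounds by `C R^{-(2n+4)}` pointwise. Since the box has volume of order
`R^{2n+2}`, integration gives a bound `C R^{-2}` on the integral of a positive function, which is
impossible as `R → ∞`. A nonnegative solution is superharmonic for `Δ_H`, so by the strong maximum
principle it is either zero or everywhere positive.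
-/

namespace HeisFrame

section CoerciveInequalities

lemma div_four_mul_sq_le_sub_add {a x T : ℝ} (τ : ℝ) (hT : 0 ≤ T) (hx : x ^ 2 ≤ a ^ 2 * T) :
    τ * (2 - τ) / 4 * a ^ 2 ≤ T - τ * x + τ / 2 * a ^ 2 := by
  have hsq : (τ * x) ^ 2 ≤ (T + τ ^ 2 / 4 * a ^ 2) ^ 2 :=
    calc (τ * x) ^ 2 ≤ τ ^ 2 * (a ^ 2 * T) := by rw [mul_pow]; gcongr
      _ ≤ (T + τ ^ 2 / 4 * a ^ 2) ^ 2 := by linarith [sq_nonneg (T - τ ^ 2 / 4 * a ^ 2)]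
  have := abs_le_of_sq_le_sq' hsq (by positivity)
  linarith

variable {V : Type*} [NormedAddCommGroup V] [InnerProductSpace ℂ V]

lemma neg_norm_mul_norm_le_re_inner (x y : V) : -(‖x‖ * ‖y‖) ≤ (inner ℂ x y).re :=
  neg_le_of_abs_le ((Complex.abs_re_le_norm _).trans (norm_inner_le_norm x y))

lemma sq_re_inner_le (x y : V) : (inner ℂ x y).re ^ 2 ≤ ‖x‖ ^ 2 * ‖y‖ ^ 2 := by
  rw [← mul_pow]
  exact sq_le_sq' (neg_norm_mul_norm_le_re_inner x y) (re_inner_le_norm (𝕜 := ℂ) x y)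

lemma norm_sq_div_add_le_re_inner_sub (D E G : V) : (‖D‖ ^ 2 + ‖E‖ ^ 2) / 8 + ‖G‖ ^ 2 / 2 ≤
    ‖D‖ ^ 2 + ‖E‖ ^ 2 + 3 * ‖G‖ ^ 2 + 2 * (inner ℂ G (D - E)).re := by
  have hinner : -(‖G‖ * (‖D‖ + ‖E‖)) ≤ (inner ℂ G (D - E)).re :=
    le_trans (by gcongr; exact norm_sub_le D E) (neg_norm_mul_norm_le_re_inner G (D - E))
  nlinarith [sq_nonneg (7 / 8 * ‖D‖ - ‖G‖), sq_nonneg (7 / 8 * ‖E‖ - ‖G‖), sq_nonneg ‖G‖]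

lemma norm_pow_six_le_sq_add_re_inner (p X : V) {δ : ℝ} (hδ : 0 ≤ δ) (hδ' : δ ≤ 1 / 2) :
    -(δ / 2) * ‖p‖ ^ 6 ≤ ‖X‖ ^ 2 + 2 * δ * ‖p‖ ^ 2 * (inner ℂ p X).re := by
  have hinner : 2 * δ * ‖p‖ ^ 2 * -(‖p‖ * ‖X‖) ≤ 2 * δ * ‖p‖ ^ 2 * (inner ℂ p X).re := by
    gcongr; exact neg_norm_mul_norm_le_re_inner p X
  have hδsq : δ ^ 2 * ‖p‖ ^ 6 ≤ δ / 2 * ‖p‖ ^ 6 := by gcongr; nlinarith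
  linarith [sq_nonneg (‖X‖ - δ * ‖p‖ ^ 3)]

/-- The constant of the Jerison–Lee type inequality, positive exactly in the subcritical range
`0 < k < 2`. -/
def coercivity (n : ℕ) (k : ℝ) : ℝ := (2 - k) * k / (4 * (n + 2))

variable {n : ℕ} {k : ℝ}

lemma coercivity_pos (hk0 : 0 < k) (hk2 : k < 2) : 0 < coercivity n k :=
  div_pos (mul_pos (sub_pos.2 hk2) hk0) (by positivity)

lemma coercivity_mul (n : ℕ) (k : ℝ) : coercivity n k * (n + 2) = (2 - k) * k / 4 := by
  unfold coercivity; field_simp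

lemma coercivity_le (n : ℕ) (k : ℝ) : coercivity n k ≤ 1 / 8 := by
  rw [coercivity, div_le_iff₀ (by positivity)]
  nlinarith [sq_nonneg (k - 1), Nat.cast_nonneg (α := ℝ) n]

lemma coercivity_mul_le (hn : 1 ≤ n) (hk0 : 0 < k) (hk2 : k < 2) :
    coercivity n k * (n - 2 + 2 * k) ≤ (2 * n - 1) * (2 - k) := by
  have hn' : (1 : ℝ) ≤ n := by exact_mod_cast hn
  calc coercivity n k * (n - 2 + 2 * k) ≤ coercivity n k * (n + 2) := by
        exact mul_le_mul_of_nonneg_left (by linarith) (coercivity_pos hk0 hk2).le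
    _ = (2 - k) * (k / 4) := by rw [coercivity_mul]; ring
    _ ≤ (2 - k) * (2 * n - 1) := mul_le_mul_of_nonneg_left (by linarith) (by linarith)
    _ = _ := mul_comm _ _

lemma coercive_tensor_terms (hn : 1 ≤ n) (hk0 : 0 < k) (hk2 : k < 2) {p D E : V}
    {F TD TE : ℝ} (hF : 0 ≤ F)
    (hTD : 0 ≤ TD) (hTE : 0 ≤ TE) (hD : ‖D‖ ^ 2 ≤ TD * ‖p‖ ^ 2) (hE : ‖E‖ ^ 2 ≤ TE * ‖p‖ ^ 2) :
    0 ≤ F * (TD + TE - (2 - k) * (inner ℂ p (D + E)).re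
      + (2 * n - 1) * (2 - k) * ‖p‖ ^ 4 - coercivity n k * (n + 2) * ‖p‖ ^ 4) := by
  have hn' : (1 : ℝ) ≤ n := by exact_mod_cast hn
  have bound (X : V) (T : ℝ) (hX : ‖X‖ ^ 2 ≤ T * ‖p‖ ^ 2) :
      (inner ℂ p X).re ^ 2 ≤ (‖p‖ ^ 2) ^ 2 * T :=
    (sq_re_inner_le p X).trans <| by nlinarith [sq_nonneg ‖p‖]
  have hDp := div_four_mul_sq_le_sub_add (2 - k) hTD (bound D TD hD)
  have hEp := div_four_mul_sq_le_sub_add (2 - k) hTE (bound E TE hE)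
  have hpow : 0 ≤ (n - 1) * ((2 - k) * ‖p‖ ^ 4) :=
    mul_nonneg (by linarith) (mul_nonneg (by linarith) (by positivity))
  refine mul_nonneg hF ?_
  have hτ : 0 ≤ (2 - k) * k / 4 * ‖p‖ ^ 4 := by
    have := mul_pos (sub_pos.2 hk2) hk0; positivity
  rw [inner_add_right, Complex.add_re, coercivity_mul]
  linarith

lemma coercive_of_norm_sq_le (hn : 1 ≤ n) (hk0 : 0 < k) (hk2 : k < 2) {p D E : V} (G : V)
    {F TD TE : ℝ} (t : ℝ) (hF : 0 ≤ F) (hTD : 0 ≤ TD) (hTE : 0 ≤ TE)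
    (hD : ‖D‖ ^ 2 ≤ TD * ‖p‖ ^ 2) (hE : ‖E‖ ^ 2 ≤ TE * ‖p‖ ^ 2) :
    coercivity n k / 2 * (‖D‖ ^ 2 + ‖E‖ ^ 2 + ‖G‖ ^ 2 + ‖p‖ ^ 6 + F ^ 3) ≤
      ((‖p‖ ^ 2 + F) * (TD + TE) + ‖D + E‖ ^ 2 + 3 * ‖G‖ ^ 2 + 2 * (inner ℂ G (D - E)).re
        - (2 - k) * F * (inner ℂ p (D + E)).re
        + (2 * n - 1) * (2 - k) * F * ‖p‖ ^ 2 * (‖p‖ ^ 2 + F) + 3 * n * (2 - k) * F * t ^ 2)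
      + coercivity n k * ((n * ‖p‖ ^ 6 - (n + 2) * ‖p‖ ^ 4 * F
        + 2 * ‖p‖ ^ 2 * (inner ℂ p (D + E)).re)
        - ((n - 2 + 2 * k) * F ^ 2 * ‖p‖ ^ 2 - n * F ^ 3)) := by
  have hn' : (1 : ℝ) ≤ n := by exact_mod_cast hn
  have hδ := coercivity_pos (n := n) hk0 hk2
  have hδ8 := coercivity_le n k
  have : 0 < 2 - k := sub_pos.2 hk2
  have htensor := coercive_tensor_terms hn hk0 hk2 hF hTD hTE hD hE
  have hG := norm_sq_div_add_le_re_inner_sub D E G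
  have hDE := norm_pow_six_le_sq_add_re_inner p (D + E) hδ.le (by linarith)
  have hF2 := mul_le_mul_of_nonneg_right (coercivity_mul_le hn hk0 hk2)
    (by positivity : 0 ≤ F ^ 2 * ‖p‖ ^ 2)
  have ht : 0 ≤ 3 * n * (2 - k) * F * t ^ 2 := by positivity
  have hnpF : coercivity n k * (‖p‖ ^ 6 + F ^ 3) ≤ coercivity n k * (n * (‖p‖ ^ 6 + F ^ 3)) :=
    mul_le_mul_of_nonneg_left (le_mul_of_one_le_left (by positivity) hn') hδ.le
  have hDEG : coercivity n k / 2 * (‖D‖ ^ 2 + ‖E‖ ^ 2 + ‖G‖ ^ 2) ≤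
      (‖D‖ ^ 2 + ‖E‖ ^ 2) / 8 + ‖G‖ ^ 2 / 2 := by
    nlinarith [sq_nonneg ‖D‖, sq_nonneg ‖E‖, sq_nonneg ‖G‖]
  have hF3 : 0 ≤ coercivity n k * F ^ 3 := by positivity
  linarith

end CoerciveInequalities

section CutoffInequalities

lemma exists_pow_mul_pow_le_add (i j : ℕ) {ε : ℝ} (hε : 0 < ε) : ∃ C : ℝ, 0 ≤ C ∧
    ∀ M r : ℝ, 0 ≤ M → 0 ≤ r →
      r ^ (i + 1) * M ^ j ≤ ε * M ^ (i + 1 + j) + C * r ^ (i + 1 + j) := by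
  set c := min 1 ε
  have hc : 0 < c := by positivity
  refine ⟨(1 / c) ^ j, by positivity, fun M r hM hr => ?_⟩
  rcases le_total r (c * M) with h | h
  · calc r ^ (i + 1) * M ^ j ≤ (c * M) ^ (i + 1) * M ^ j := by gcongr
      _ = c ^ (i + 1) * M ^ (i + 1 + j) := by ring
      _ ≤ ε * M ^ (i + 1 + j) := by
          gcongr
          calc c ^ (i + 1) ≤ c := pow_le_of_le_one hc.le (min_le_left _ _) i.succ_ne_zero
            _ ≤ ε := min_le_right _ _
      _ ≤ _ := le_add_of_nonneg_right (by positivity)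
  · have hM' : M ≤ 1 / c * r := by
      rw [one_div_mul_eq_div, le_div_iff₀ hc]; linarith
    calc r ^ (i + 1) * M ^ j ≤ r ^ (i + 1) * (1 / c * r) ^ j := by gcongr
      _ = (1 / c) ^ j * r ^ (i + 1 + j) := by ring
      _ ≤ _ := le_add_of_nonneg_left (by positivity)

lemma exists_lower_order_le {K ε : ℝ} (hK : 0 ≤ K) (hε : 0 < ε) : ∃ C : ℝ, 0 ≤ C ∧
    ∀ α F r : ℝ, 0 ≤ α → 0 ≤ F → 0 ≤ r →
      K * (r * (α ^ 5 + F ^ 2 * α) + r ^ 2 * (α ^ 4 + F ^ 2 + α ^ 2 * F) + r ^ 4 * α ^ 2) ≤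
        ε * (α ^ 6 + F ^ 3) + C * r ^ 6 := by
  have hε' : 0 < ε / (6 * (K + 1)) := by positivity
  obtain ⟨C₁, hC₁, h₁⟩ := exists_pow_mul_pow_le_add 0 5 hε'
  obtain ⟨C₂, hC₂, h₂⟩ := exists_pow_mul_pow_le_add 1 4 hε'
  obtain ⟨C₃, hC₃, h₃⟩ := exists_pow_mul_pow_le_add 3 2 hε'
  refine ⟨K * (2 * C₁ + 3 * C₂ + C₃), by positivity, fun α F r hα hF hr => ?_⟩
  obtain ⟨M, hM, hαM, hFM, hM6⟩ : ∃ M : ℝ, 0 ≤ M ∧ α ≤ M ∧ F ≤ M ^ 2 ∧ M ^ 6 ≤ α ^ 6 + F ^ 3 := by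
    rcases le_total α √F with h | h
    · refine ⟨√F, by positivity, h, (Real.sq_sqrt hF).ge, ?_⟩
      rw [show √F ^ 6 = (√F ^ 2) ^ 3 by ring, Real.sq_sqrt hF]
      exact le_add_of_nonneg_left (by positivity)
    · exact ⟨α, hα, le_rfl, (Real.sqrt_le_left hα).1 h, le_add_of_nonneg_right (by positivity)⟩
  calc K * (r * (α ^ 5 + F ^ 2 * α) + r ^ 2 * (α ^ 4 + F ^ 2 + α ^ 2 * F) + r ^ 4 * α ^ 2)
      ≤ K * (r * (M ^ 5 + (M ^ 2) ^ 2 * M) + r ^ 2 * (M ^ 4 + (M ^ 2) ^ 2 + M ^ 2 * M ^ 2)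
          + r ^ 4 * M ^ 2) := by gcongr
    _ = K * (2 * (r ^ 1 * M ^ 5) + 3 * (r ^ 2 * M ^ 4) + r ^ 4 * M ^ 2) := by ring
    _ ≤ K * (6 * (ε / (6 * (K + 1)) * M ^ 6) + (2 * C₁ + 3 * C₂ + C₃) * r ^ 6) := by
        refine mul_le_mul_of_nonneg_left ?_ hK
        linarith [h₁ M r hM hr, h₂ M r hM hr, h₃ M r hM hr]
    _ = K / (K + 1) * (ε * M ^ 6) + K * (2 * C₁ + 3 * C₂ + C₃) * r ^ 6 := by field_simp
    _ ≤ 1 * (ε * (α ^ 6 + F ^ 3)) + K * (2 * C₁ + 3 * C₂ + C₃) * r ^ 6 := by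
        gcongr; exact div_le_one_of_le₀ (by linarith) (by positivity)
    _ = _ := by rw [one_mul]

lemma mul_le_eighth_sq_add (x y : ℝ) {δ : ℝ} (hδ : 0 < δ) :
    x * y ≤ δ / 8 * y ^ 2 + 2 / δ * x ^ 2 := by
  have h : δ / 8 * y ^ 2 + 2 / δ * x ^ 2 - x * y = (δ * y - 4 * x) ^ 2 / (8 * δ) := by
    field_simp; ring
  linarith [show 0 ≤ (δ * y - 4 * x) ^ 2 / (8 * δ) by positivity]

lemma cutoff_cross_terms_le {δ : ℝ} (hδ : 0 < δ) (s α F t D E G r : ℝ) {Λ : ℝ}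
    (hΛ : Λ = 132 * s ^ 2 / δ) :
    s * r * ((α ^ 2 + F + 2 * t) * (D + E) + 3 * t * G) + Λ * r ^ 2 * (G * α)
      + Λ * s * r ^ 3 * t * α ≤ δ / 4 * (D ^ 2 + E ^ 2 + G ^ 2) + Λ * r ^ 2 * t ^ 2
      + Λ / 11 * (r ^ 2 * (α ^ 4 + F ^ 2)) + (2 * Λ ^ 2 / δ + Λ * s ^ 2 / 2) * (r ^ 4 * α ^ 2) := by
  have hD := mul_le_eighth_sq_add (s * r * (α ^ 2 + F + 2 * t)) D hδ
  have hE := mul_le_eighth_sq_add (s * r * (α ^ 2 + F + 2 * t)) E hδ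
  have htG := mul_le_eighth_sq_add (3 * s * r * t) G hδ
  have hαG := mul_le_eighth_sq_add (Λ * r ^ 2 * α) G hδ
  have hsq : 4 * s ^ 2 / δ * r ^ 2 * (α ^ 2 + F + 2 * t) ^ 2 ≤
      4 * s ^ 2 / δ * r ^ 2 * (3 * (α ^ 4 + F ^ 2 + 4 * t ^ 2)) := by
    gcongr
    nlinarith [sq_nonneg (α ^ 2 - F), sq_nonneg (α ^ 2 - 2 * t), sq_nonneg (F - 2 * t)]
  have htα : 0 ≤ Λ / 2 * (r * t - s * r ^ 2 * α) ^ 2 := by rw [hΛ]; positivity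
  have hs : 0 ≤ δ / 8 * (D ^ 2 + E ^ 2) := by positivity
  have hΛs : s ^ 2 / δ = Λ / 132 := by rw [hΛ]; ring
  linear_combination hD + hE + htG + hαG + hsq + htα + hs
    + (r ^ 2 * (12 * (α ^ 4 + F ^ 2) + 66 * t ^ 2)) * hΛs

/-- The parameters `(δ, s, Λ, C)` are such that the cutoff error is absorbed up to `C r ^ 6`. -/
def IsCutoffConstant (δ s Λ C : ℝ) : Prop :=
  ∀ α F t D E G r : ℝ, 0 ≤ α → 0 ≤ F → 0 ≤ r →
    δ / 4 * F ^ 3 - C * r ^ 6 ≤ δ / 2 * (D ^ 2 + E ^ 2 + G ^ 2 + α ^ 6 + F ^ 3)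
      - s * r * ((α ^ 2 + F + 2 * t) * (D + E) + 3 * t * G + δ * (α ^ 4 + F ^ 2) * α)
      - Λ * r ^ 2 * (α ^ 2 * (α ^ 2 + F) + G * α - t ^ 2) - Λ * s * r ^ 3 * t * α

lemma exists_isCutoffConstant {δ s : ℝ} (hδ : 0 < δ) (hs : 0 ≤ s) :
    ∃ Λ C : ℝ, 0 ≤ Λ ∧ 0 ≤ C ∧ IsCutoffConstant δ s Λ C := by
  set Λ := 132 * s ^ 2 / δ with hΛ
  have hΛ0 : 0 ≤ Λ := by positivity
  set K₄ := 2 * Λ ^ 2 / δ + Λ * s ^ 2 / 2 with hK₄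
  have : 0 ≤ K₄ := by positivity
  obtain ⟨C, hC, h⟩ := exists_lower_order_le (K := s * δ + 2 * Λ + K₄) (by positivity)
    (show 0 < δ / 4 by positivity)
  refine ⟨Λ, C, hΛ0, hC, fun α F t D E G r hα hF hr => ?_⟩
  have hcross := cutoff_cross_terms_le hδ s α F t D E G r hΛ
  rw [← hK₄] at hcross
  have hlower := h α F r hα hF hr
  have h₁ : 0 ≤ (2 * Λ + K₄) * (r * (α ^ 5 + F ^ 2 * α)) := by positivity
  have h₂ : 0 ≤ (s * δ + K₄ + 10 / 11 * Λ) * (r ^ 2 * (α ^ 4 + F ^ 2)) + Λ * (r ^ 2 * F ^ 2) := by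
    positivity
  have h₃ : 0 ≤ (s * δ + K₄ + Λ) * (r ^ 2 * (α ^ 2 * F)) := by positivity
  have h₄ : 0 ≤ (s * δ + 2 * Λ) * (r ^ 4 * α ^ 2) := by positivity
  have h₅ : 0 ≤ δ / 4 * (D ^ 2 + E ^ 2 + G ^ 2) + δ / 4 * α ^ 6 := by positivity
  linarith

lemma IsCutoffConstant.le_of_bounds {δ s Λ C : ℝ} (H : IsCutoffConstant δ s Λ C) (hs : 2 ≤ s)
    (hΛ : 0 ≤ Λ) {α F t D E G r h divM ωM divU ωU : ℝ} (hα : 0 ≤ α) (hF : 0 ≤ F) (ht : 0 ≤ t)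
    (hr : 0 ≤ r) (hh : 0 ≤ h)
    (hdivM : δ / 2 * (D ^ 2 + E ^ 2 + G ^ 2 + α ^ 6 + F ^ 3) ≤ divM)
    (hωM : -(r * ((α ^ 2 + F + 2 * t) * (D + E) + 3 * t * G + δ * (α ^ 4 + F ^ 2) * α)) ≤ ωM)
    (hdivU : divU ≤ G * α + α ^ 2 * (α ^ 2 + F) - t ^ 2) (hωU : ωU ≤ r * (t * α)) :
    δ / 4 * (h ^ 2 * F) ^ 3 - C * r ^ 6 ≤
      h ^ 6 * divM + s * h ^ 5 * ωM - Λ * r ^ 2 * (h ^ 4 * divU + (s - 2) * h ^ 3 * ωU) := by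
  have : 0 ≤ s := by linarith
  have hcut := H (h * α) (h ^ 2 * F) (h ^ 2 * t) (h ^ 3 * D) (h ^ 3 * E) (h ^ 3 * G) r
    (by positivity) (by positivity) hr
  have hdivM' := mul_le_mul_of_nonneg_left hdivM (by positivity : 0 ≤ h ^ 6)
  have hωM' := mul_le_mul_of_nonneg_left hωM (by positivity : 0 ≤ s * h ^ 5)
  have hdivU' := mul_le_mul_of_nonneg_left hdivU (by positivity : 0 ≤ Λ * r ^ 2 * h ^ 4)
  have hωU' : Λ * r ^ 2 * h ^ 3 * ((s - 2) * ωU) ≤ Λ * r ^ 2 * h ^ 3 * (s * (r * (t * α))) := by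
    gcongr ?_ * ?_
    calc (s - 2) * ωU ≤ (s - 2) * (r * (t * α)) :=
          mul_le_mul_of_nonneg_left hωU (sub_nonneg.2 hs)
      _ ≤ s * (r * (t * α)) := by gcongr; linarith
  linarith

lemma rpow_mul_pow_le_of_sq_mul_le {μ κ F h r : ℝ} (hμ : 0 ≤ μ) (hκ : 0 ≤ κ) (hF : 0 ≤ F)
    (hh : 0 ≤ h) (hh1 : h ≤ 1) (hr : 0 ≤ r) (hr1 : r ≤ 1) {m σ : ℕ} (hm : m ≤ 2 * μ)
    (hσ : 2 * μ ≤ σ) (hle : h ^ 2 * F ≤ κ * r ^ 2) : h ^ σ * F ^ μ ≤ κ ^ μ * r ^ m := by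
  have rpow_sq {x : ℝ} (hx : 0 ≤ x) : (x ^ 2) ^ μ = x ^ (2 * μ) := by
    rw [← Real.rpow_two, Real.rpow_mul hx]
  calc h ^ σ * F ^ μ ≤ (h ^ 2) ^ μ * F ^ μ := by
        rw [rpow_sq hh, ← Real.rpow_natCast h σ]
        gcongr ?_ * _
        exact Real.rpow_le_rpow_of_exponent_ge' hh hh1 (by positivity) hσ
    _ = (h ^ 2 * F) ^ μ := (Real.mul_rpow (by positivity) hF).symm
    _ ≤ (κ * r ^ 2) ^ μ := by gcongr
    _ = κ ^ μ * r ^ (2 * μ) := by rw [Real.mul_rpow hκ (by positivity), rpow_sq hr]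
    _ ≤ κ ^ μ * r ^ m := by
        rw [← Real.rpow_natCast r m]
        gcongr _ * ?_
        exact Real.rpow_le_rpow_of_exponent_ge' hr hr1 (by positivity) hm

lemma exists_absorb_weight {δ C A μ : ℝ} (hδ : 0 < δ) (hC : 0 ≤ C) (hA : 0 ≤ A) (hμ : 0 ≤ μ)
    {m σ : ℕ} (hm : m ≤ 2 * μ) (hσ : 2 * μ ≤ σ) : ∃ C' : ℝ, ∀ F h r : ℝ,
      0 ≤ F → 0 ≤ h → h ≤ 1 → 0 ≤ r → r ≤ 1 →
      δ / 8 * (A * F ^ μ * F ^ 3) * h ^ (σ + 6) - C' * r ^ (m + 6) ≤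
        A * F ^ μ * (h ^ σ * (δ / 4 * (h ^ 2 * F) ^ 3 - C * r ^ 6)) := by
  obtain ⟨κ, hκ0, hκ⟩ : ∃ κ : ℝ, 0 ≤ κ ∧ κ ^ 3 = 8 * C / δ :=
    ⟨(8 * C / δ) ^ (3 : ℝ)⁻¹, by positivity,
      Real.rpow_inv_natCast_pow (by positivity) three_ne_zero⟩
  refine ⟨C * A * κ ^ μ, fun F h r hF hh hh1 hr hr1 => ?_⟩
  suffices A * F ^ μ * (h ^ σ * (C * r ^ 6)) ≤
      δ / 8 * (A * F ^ μ * F ^ 3) * h ^ (σ + 6) + C * A * κ ^ μ * r ^ (m + 6) by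
    linear_combination this
  rcases le_total (C * r ^ 6) (δ / 8 * (h ^ 2 * F) ^ 3) with hle | hle
  · calc A * F ^ μ * (h ^ σ * (C * r ^ 6)) ≤ A * F ^ μ * (h ^ σ * (δ / 8 * (h ^ 2 * F) ^ 3)) := by
          gcongr
      _ = δ / 8 * (A * F ^ μ * F ^ 3) * h ^ (σ + 6) := by ring
      _ ≤ _ := le_add_of_nonneg_right (by positivity)
  · have hcube : (h ^ 2 * F) ^ 3 ≤ (κ * r ^ 2) ^ 3 := by
      rw [mul_pow κ, hκ, div_mul_eq_mul_div, le_div_iff₀ hδ]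
      linear_combination 8 * hle
    have hweight := rpow_mul_pow_le_of_sq_mul_le hμ hκ0 hF hh hh1 hr hr1 hm hσ
      (le_of_pow_le_pow_left₀ three_ne_zero (by positivity) hcube)
    calc A * F ^ μ * (h ^ σ * (C * r ^ 6)) = C * A * r ^ 6 * (h ^ σ * F ^ μ) := by ring
      _ ≤ C * A * r ^ 6 * (κ ^ μ * r ^ m) := by gcongr
      _ = C * A * κ ^ μ * r ^ (m + 6) := by ring
      _ ≤ _ := le_add_of_nonneg_left (by positivity)

end CutoffInequalities

end HeisFrame

open Matrix

/-- A Heisenberg frame: abstract derivations `Z i`, `Zb i` and `R` on a commutative star algebra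
which satisfy the commutation relations of the CR vector fields `Z_i`, `Z̄_i` and of `i ∂_t`.
The factor `i` is absorbed in `R`, so that no imaginary unit occurs in the calculus. -/
structure HeisFrame (n : ℕ) (A : Type*) [CommRing A] [StarRing A] [Algebra ℂ A] where
  Z : Fin n → Derivation ℂ A A
  Zb : Fin n → Derivation ℂ A A
  R : Derivation ℂ A A
  star_Z : ∀ i x, star (Z i x) = Zb i (star x)
  star_R : ∀ x, star (R x) = -R (star x)
  Z_comm : ∀ i j x, Z i (Z j x) = Z j (Z i x)
  Zb_Z : ∀ i j x, Zb i (Z j x) = Z j (Zb i x) + if i = j then 2 * R x else 0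
  R_Z : ∀ i x, R (Z i x) = Z i (R x)

namespace HeisFrame

variable {n : ℕ} {A : Type*} [CommRing A] [StarRing A] [Algebra ℂ A] (S : HeisFrame n A)

section Calculus

/-- The `(1,0)`-gradient `(Z_i x)_i`. -/
def grad (x : A) : Fin n → A := fun i => S.Z i x

/-- The `(0,1)`-gradient `(Z̄_i x)_i`. -/
def gradBar (x : A) : Fin n → A := fun i => S.Zb i x

/-- The matrix `(Z_j X_i)_{ij}`. -/
def jac (X : Fin n → A) : Matrix (Fin n) (Fin n) A := .of fun i j => S.Z j (X i)

/-- The matrix `(Z̄_j X_i)_{ij}`. -/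
def jacBar (X : Fin n → A) : Matrix (Fin n) (Fin n) A := .of fun i j => S.Zb j (X i)

/-- The divergence `∑ Z̄_i X_i`. -/
def div (X : Fin n → A) : A := ∑ i, S.Zb i (X i)

/-- The divergence `(∑_i Z̄_i M_{ij})_j` of a matrix over its first index. -/
def divCols (M : Matrix (Fin n) (Fin n) A) : Fin n → A := fun j => S.div fun i => M i j

lemma star_Zb (i : Fin n) (x : A) : star (S.Zb i x) = S.Z i (star x) := by
  rw [← star_star x, ← S.star_Z, star_star, star_star]

lemma Zb_comm (i j : Fin n) (x : A) : S.Zb i (S.Zb j x) = S.Zb j (S.Zb i x) := by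
  simpa only [S.star_Z, star_star] using congrArg star (S.Z_comm i j (star x))

lemma R_Zb (i : Fin n) (x : A) : S.R (S.Zb i x) = S.Zb i (S.R x) := by
  have h := congrArg star (S.R_Z i (star x))
  simpa only [S.star_R, S.star_Z, star_star, map_neg, neg_inj] using h

lemma star_grad (x : A) : star (S.grad x) = S.gradBar (star x) :=
  funext fun i => S.star_Z i x

lemma star_gradBar (x : A) : star (S.gradBar x) = S.grad (star x) :=
  funext fun i => S.star_Zb i x

lemma grad_star (x : A) : S.grad (star x) = star (S.gradBar x) := (S.star_gradBar x).symm

lemma grad_add (x y : A) : S.grad (x + y) = S.grad x + S.grad y := funext fun _ => map_add _ x y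

lemma grad_sub (x y : A) : S.grad (x - y) = S.grad x - S.grad y := funext fun _ => map_sub _ x y

lemma gradBar_add (x y : A) : S.gradBar (x + y) = S.gradBar x + S.gradBar y :=
  funext fun _ => map_add _ x y

lemma gradBar_sub (x y : A) : S.gradBar (x - y) = S.gradBar x - S.gradBar y :=
  funext fun _ => map_sub _ x y

lemma gradBar_neg (x : A) : S.gradBar (-x) = -S.gradBar x := funext fun _ => map_neg _ x

lemma gradBar_natCast_mul (m : ℕ) (x : A) : S.gradBar (m * x) = (m : A) • S.gradBar x := by
  ext i; simp [gradBar]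

lemma gradBar_pow (x : A) (m : ℕ) :
    S.gradBar (x ^ m) = ((m : A) * x ^ (m - 1)) • S.gradBar x := by
  ext i
  simp [gradBar, Derivation.leibniz_pow, mul_assoc]

lemma gradBar_dotProduct (X Y : Fin n → A) :
    S.gradBar (X ⬝ᵥ Y) = X ᵥ* S.jacBar Y + Y ᵥ* S.jacBar X := by
  ext i
  simp [gradBar, dotProduct, vecMul, jacBar, Finset.sum_add_distrib]

lemma jacBar_star_grad (x : A) : S.jacBar (star (S.grad x)) = (S.jac (S.grad x))ᴴ := by
  ext i j
  simp [jacBar, jac, grad, S.star_Z, S.Zb_comm j i]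

lemma conjTranspose_jacBar_grad (x : A) :
    (S.jacBar (S.grad x))ᴴ = S.jacBar (S.grad (star x)) - (2 * S.R (star x)) • 1 := by
  ext i j
  obtain rfl | h := eq_or_ne i j
  · simp [jacBar, grad, S.star_Z, S.star_Zb, S.star_R, S.Zb_Z]
  · simp [jacBar, grad, S.star_Z, S.star_Zb, S.Zb_Z, h]

lemma div_eq_trace (X : Fin n → A) : S.div X = (S.jacBar X).trace := rfl

lemma div_add (X Y : Fin n → A) : S.div (X + Y) = S.div X + S.div Y := by
  simp [div, Finset.sum_add_distrib]

lemma div_sub (X Y : Fin n → A) : S.div (X - Y) = S.div X - S.div Y := by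
  simp [div, Finset.sum_sub_distrib]

lemma div_smul (x : A) (X : Fin n → A) : S.div (x • X) = S.gradBar x ⬝ᵥ X + x * S.div X := by
  simp [div, gradBar, dotProduct, Finset.sum_add_distrib, Finset.mul_sum, mul_comm, add_comm]

lemma div_mulVec (M : Matrix (Fin n) (Fin n) A) (Y : Fin n → A) :
    S.div (M *ᵥ Y) = S.divCols M ⬝ᵥ Y + (M * S.jacBar Y).trace := by
  simp only [div, divCols, mulVec, dotProduct, trace, diag, mul_apply, jacBar, of_apply, map_sum,
    Derivation.leibniz, smul_eq_mul, Finset.sum_add_distrib, Finset.sum_mul]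
  rw [add_comm, Finset.sum_comm]
  simp only [mul_comm]

lemma divCols_add (M N : Matrix (Fin n) (Fin n) A) :
    S.divCols (M + N) = S.divCols M + S.divCols N :=
  funext fun _ => S.div_add _ _

lemma divCols_sub (M N : Matrix (Fin n) (Fin n) A) :
    S.divCols (M - N) = S.divCols M - S.divCols N :=
  funext fun _ => S.div_sub _ _

lemma divCols_two_smul (M : Matrix (Fin n) (Fin n) A) :
    S.divCols ((2 : A) • M) = (2 : A) • S.divCols M := by
  rw [two_smul, two_smul, S.divCols_add]

lemma divCols_scalar (x : A) : S.divCols (x • 1) = S.gradBar x := by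
  ext j
  simp [divCols, div, gradBar, Matrix.one_apply, apply_ite (S.Zb _)]

lemma divCols_jacBar (X : Fin n → A) : S.divCols (S.jacBar X) = S.gradBar (S.div X) := by
  ext j
  simp [divCols, div, jacBar, gradBar, S.Zb_comm j]

lemma divCols_vecMulVec (X Y : Fin n → A) :
    S.divCols (vecMulVec X Y) = S.div X • Y + S.jacBar Y *ᵥ X := by
  ext j
  simp only [divCols, div, vecMulVec_apply, Derivation.leibniz, smul_eq_mul, mulVec, dotProduct,
    jacBar, of_apply, Finset.sum_add_distrib, Pi.add_apply, Pi.smul_apply, Finset.sum_mul]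
  simp only [mul_comm, add_comm]

lemma divCols_jac_grad (x : A) :
    S.divCols (S.jac (S.grad x)) = S.grad (S.div (S.grad x)) + (2 : A) • S.grad (S.R x) := by
  ext j
  have swap (i : Fin n) : S.Zb i (S.Z j (S.Z i x)) =
      S.Z j (S.Zb i (S.Z i x)) + if i = j then 2 * S.Z i (S.R x) else 0 := by
    rw [S.Zb_Z, S.R_Z]
  simp [divCols, div, jac, grad, swap, Finset.sum_add_distrib]

lemma div_grad_R (x : A) : S.div (S.grad (S.R x)) = S.R (S.div (S.grad x)) := by
  simp [div, grad, S.R_Zb, S.R_Z]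

end Calculus

section LogSolution

variable (f F : A)

/-- The squared length `|∂f|²` of the `(1,0)`-gradient of a self-adjoint `f`. -/
def gradSq : A := star (S.grad f) ⬝ᵥ S.grad f

/-- Ma and Ou's function `g = |∂f|² + F - i f₀`, where `f₀ = ∂_t f`. -/
def g : A := S.gradSq f + F - S.R f

/-- The tensor `D_{ij} = f_{ij} - 2 f_i f_j`. -/
def tensorD : Matrix (Fin n) (Fin n) A :=
  S.jac (S.grad f) - (2 : A) • vecMulVec (S.grad f) (S.grad f)

/-- The tensor `E_{ij̄} = f_{ij̄} + g δ_{ij}`, Hermitian and trace free for solutions. -/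
def tensorE : Matrix (Fin n) (Fin n) A := S.jacBar (S.grad f) + S.g f F • 1

/-- The vector field `D_i = ∑ D_{ij} f_{j̄}`. -/
def vecD : Fin n → A := S.tensorD f *ᵥ star (S.grad f)

/-- The vector field `E_i = ∑ E_{ij̄} f_j`. -/
def vecE : Fin n → A := S.tensorE f F *ᵥ S.grad f

/-- The vector field `G_i = i f_{0i} + g f_i`. -/
def vecG : Fin n → A := S.grad (S.R f) + S.g f F • S.grad f

/-- The Jerison–Lee type vector field
`(|∂f|² + F + 2 i f₀) E + (|∂f|² + F - 2 i f₀) D - 3 i f₀ G`. -/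
def vecW : Fin n → A :=
  (S.gradSq f + F + 2 * S.R f) • S.vecE f F + (S.gradSq f + F - 2 * S.R f) • S.vecD f
    - (3 * S.R f) • S.vecG f F

/-- The vector field `W + δ (|∂f|⁴ - F²) ∂f`, whose weighted divergence is coercive. -/
def vecM (δ : ℂ) : Fin n → A :=
  S.vecW f F + δ • (S.gradSq f ^ 2 • S.grad f - F ^ 2 • S.grad f)

lemma grad_R : S.grad (S.R f) = S.vecG f F - S.g f F • S.grad f := by rw [vecG]; abel

lemma star_gradSq : star (S.gradSq f) = S.gradSq f := (star_dotProduct _ _).symm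

lemma star_vecD : star (S.vecD f) = S.grad f ᵥ* S.jacBar (star (S.grad f))
    - (2 * S.gradSq f) • star (S.grad f) := by
  rw [vecD, star_mulVec, star_star, tensorD, conjTranspose_sub, ← S.jacBar_star_grad,
    conjTranspose_smul, star_ofNat, conjTranspose_vecMulVec, vecMul_sub, vecMul_smul,
    vecMul_vecMulVec, dotProduct_comm, ← gradSq, smul_smul]

/-- The equation `-Δ_H u = u ^ p` in the variables `f = log u / n` and `F = u ^ (p - 1) / (4 n²)`,
with `κ = n (p - 1)`. -/
structure IsLogSolution (κ f F : A) : Prop where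
  star_kappa : star κ = κ
  star_f : star f = f
  star_F : star F = F
  grad_F : S.grad F = (κ * F) • S.grad f
  R_F : S.R F = κ * F * S.R f
  div_grad_f : S.div (S.grad f) = -(n : A) * S.g f F

end LogSolution

namespace IsLogSolution

variable {S} {κ f F : A} (H : S.IsLogSolution κ f F)
include H

lemma gradBar_f : S.gradBar f = star (S.grad f) := by rw [S.star_grad, H.star_f]

lemma gradBar_F : S.gradBar F = (κ * F) • star (S.grad f) := by
  have h : star (S.grad F) = star ((κ * F) • S.grad f) := congrArg star H.grad_F
  rwa [S.star_grad, H.star_F, star_smul, star_mul', H.star_kappa, H.star_F] at h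

lemma star_g : star (S.g f F) = S.gradSq f + F + S.R f := by
  simp only [g, star_sub, star_add, S.star_gradSq, H.star_F, S.star_R, H.star_f, sub_neg_eq_add]

lemma conjTranspose_tensorE : (S.tensorE f F)ᴴ = S.tensorE f F := by
  rw [tensorE, conjTranspose_add, S.conjTranspose_jacBar_grad, conjTranspose_smul,
    conjTranspose_one, H.star_f, H.star_g, g, add_smul, sub_smul, two_mul, add_smul]
  abel

lemma star_vecE : star (S.vecE f F) =
    star (S.grad f) ᵥ* S.jacBar (S.grad f) + S.g f F • star (S.grad f) := by
  rw [vecE, star_mulVec, H.conjTranspose_tensorE, tensorE, vecMul_add, vecMul_smul, vecMul_one]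

lemma star_vecG : star (S.vecG f F) = star (S.g f F) • star (S.grad f) - S.gradBar (S.R f) := by
  ext i
  simp [vecG, grad, gradBar, S.star_Z, S.star_R, H.star_f]
  ring

lemma gradBar_gradSq : S.gradBar (S.gradSq f) = star (S.vecD f) + star (S.vecE f F)
    + (2 * S.gradSq f - S.g f F) • star (S.grad f) := by
  rw [H.star_vecE, S.star_vecD, gradSq, S.gradBar_dotProduct]
  module

lemma gradBar_R_f : S.gradBar (S.R f) = star (S.g f F) • star (S.grad f) - star (S.vecG f F) := by
  rw [H.star_vecG]; abel

lemma gradBar_g : S.gradBar (S.g f F) = star (S.vecD f) + star (S.vecE f F) + star (S.vecG f F)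
    + ((κ - 2) * F) • star (S.grad f) := by
  rw [g, S.gradBar_sub, S.gradBar_add, H.gradBar_gradSq, H.gradBar_F, H.gradBar_R_f, H.star_g, g]
  module

lemma grad_g : S.grad (S.g f F) = S.vecD f + S.vecE f F - S.vecG f F
    + (2 * S.g f F + (κ - 2) * F) • S.grad f := by
  have grad_gradSq : S.grad (S.gradSq f) = S.vecD f + S.vecE f F
      + (2 * S.gradSq f - star (S.g f F)) • S.grad f := by
    conv_lhs => rw [← S.star_gradSq, S.grad_star, H.gradBar_gradSq]
    simp only [star_add, star_star, star_smul, star_sub, star_mul', star_ofNat, S.star_gradSq]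
  rw [H.star_g] at grad_gradSq
  conv_lhs => rw [g, S.grad_sub, S.grad_add, grad_gradSq, H.grad_F, S.grad_R f F]
  rw [g]
  module

lemma divCols_tensorD : S.divCols (S.tensorD f) =
    (n + 2 : A) • (S.vecG f F - S.vecE f F) - (n : A) • S.vecD f
      - (n * (κ - 2) * F) • S.grad f := by
  have grad_div : S.grad (S.div (S.grad f)) = -(n : A) • S.grad (S.g f F) := by
    rw [H.div_grad_f]; ext i; simp [grad]
  have jacBar_mulVec : S.jacBar (S.grad f) *ᵥ S.grad f
      = S.vecE f F - S.g f F • S.grad f := by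
    rw [vecE, tensorE, add_mulVec, smul_mulVec, one_mulVec]; abel
  rw [tensorD, S.divCols_sub, S.divCols_jac_grad, grad_div, H.grad_g, S.grad_R f F,
    S.divCols_two_smul, S.divCols_vecMulVec, jacBar_mulVec, H.div_grad_f]
  module

lemma divCols_tensorE : S.divCols (S.tensorE f F) = (1 - n : A) • S.gradBar (S.g f F) := by
  rw [tensorE, S.divCols_add, S.divCols_jacBar, S.divCols_scalar, H.div_grad_f, neg_mul,
    S.gradBar_neg, S.gradBar_natCast_mul]
  module

lemma trace_tensorE : (S.tensorE f F).trace = 0 := by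
  rw [tensorE, trace_add, ← S.div_eq_trace, H.div_grad_f, trace_smul, trace_one, Fintype.card_fin,
    smul_eq_mul]
  ring

lemma div_vecD : S.div (S.vecD f) = (S.tensorD f * (S.tensorD f)ᴴ).trace
    + (2 - n) * (star (S.grad f) ⬝ᵥ S.vecD f)
    + (n + 2) * (star (S.grad f) ⬝ᵥ S.vecG f F - star (S.grad f) ⬝ᵥ S.vecE f F)
    - n * (κ - 2) * F * S.gradSq f := by
  have hjac : S.jacBar (star (S.grad f))
      = (S.tensorD f)ᴴ + (2 : A) • vecMulVec (star (S.grad f)) (star (S.grad f)) := by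
    rw [S.jacBar_star_grad, tensorD, conjTranspose_sub, conjTranspose_smul, star_ofNat,
      conjTranspose_vecMulVec, sub_add_cancel]
  rw [vecD, S.div_mulVec, ← vecD, hjac, mul_add, trace_add, Matrix.mul_smul, trace_smul,
    mul_vecMulVec, trace_vecMulVec, ← vecD, H.divCols_tensorD, gradSq]
  simp only [dotProduct_comm _ (star (S.grad f)), dotProduct_sub, dotProduct_smul, smul_eq_mul]
  ring

lemma div_vecE : S.div (S.vecE f F) = (S.tensorE f F * (S.tensorE f F)ᴴ).trace
    + (1 - n) * (S.gradBar (S.g f F) ⬝ᵥ S.grad f) := by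
  have hjac : S.jacBar (S.grad f) = S.tensorE f F - S.g f F • 1 := by rw [tensorE]; abel
  rw [vecE, S.div_mulVec, hjac, mul_sub, Matrix.mul_smul, mul_one, trace_sub, trace_smul,
    H.trace_tensorE, H.divCols_tensorE, H.conjTranspose_tensorE, smul_dotProduct, smul_eq_mul]
  ring

lemma R_gradSq : S.R (S.gradSq f) =
    star (S.grad f) ⬝ᵥ S.vecG f F - star (S.vecG f F) ⬝ᵥ S.grad f + 2 * S.R f * S.gradSq f := by
  have leibniz : S.R (S.gradSq f) =
      star (S.grad f) ⬝ᵥ S.grad (S.R f) + S.gradBar (S.R f) ⬝ᵥ S.grad f := by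
    rw [gradSq, ← H.gradBar_f]
    simp [dotProduct, grad, gradBar, S.R_Z, S.R_Zb, Finset.sum_add_distrib, mul_comm, add_comm]
  rw [leibniz, S.grad_R f F, H.gradBar_R_f, dotProduct_sub, sub_dotProduct, dotProduct_smul,
    smul_dotProduct, H.star_g, g, ← gradSq, smul_eq_mul, smul_eq_mul]
  ring

lemma div_vecG : S.div (S.vecG f F) = S.gradBar (S.g f F) ⬝ᵥ S.grad f - n * S.g f F ^ 2
    - n * (S.R (S.gradSq f) + κ * F * S.R f - S.R (S.R f)) := by
  have div_grad_R : S.div (S.grad (S.R f)) = -(n : A) * S.R (S.g f F) := by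
    rw [S.div_grad_R, H.div_grad_f]
    simp
  rw [vecG, S.div_add, S.div_smul, div_grad_R, H.div_grad_f]
  conv_lhs => rw [show S.R (S.g f F) = _ by rw [g, map_sub, map_add, H.R_F]]
  ring

end IsLogSolution

section WeightedDivergence

/-- The divergence `e^{-(2n-2)f} ∑ Z̄_i (e^{(2n-2)f} X_i)` with weight `e^{(2n-2)f}`. -/
def wdiv (f : A) (X : Fin n → A) : A := (2 * n - 2) * (S.gradBar f ⬝ᵥ X) + S.div X

variable (f : A)

lemma wdiv_add (X Y : Fin n → A) : S.wdiv f (X + Y) = S.wdiv f X + S.wdiv f Y := by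
  rw [wdiv, wdiv, wdiv, dotProduct_add, S.div_add]; ring

lemma wdiv_sub (X Y : Fin n → A) : S.wdiv f (X - Y) = S.wdiv f X - S.wdiv f Y := by
  rw [wdiv, wdiv, wdiv, dotProduct_sub, S.div_sub]; ring

lemma wdiv_smul (x : A) (X : Fin n → A) :
    S.wdiv f (x • X) = S.gradBar x ⬝ᵥ X + x * S.wdiv f X := by
  rw [wdiv, wdiv, dotProduct_smul, S.div_smul, smul_eq_mul]; ring

lemma wdiv_complex_smul (c : ℂ) (X : Fin n → A) : S.wdiv f (c • X) = c • S.wdiv f X := by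
  simp only [wdiv, div, dotProduct_smul, Pi.smul_apply, Derivation.map_smul, Finset.smul_sum,
    smul_add, mul_smul_comm]

lemma div_weight_smul {e : A} (he : S.gradBar e = ((2 * n - 2) * e) • S.gradBar f)
    (X : Fin n → A) : S.div (e • X) = e * S.wdiv f X := by
  rw [S.div_smul, he, wdiv, smul_dotProduct, smul_eq_mul]; ring

end WeightedDivergence

lemma star_grad_dotProduct_grad (f : A) : star (S.grad f) ⬝ᵥ S.grad f = S.gradSq f := rfl

namespace IsLogSolution

variable {S} {κ f F : A} (H : S.IsLogSolution κ f F)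
include H

lemma star_vecE_dotProduct_grad :
    star (S.vecE f F) ⬝ᵥ S.grad f = star (S.grad f) ⬝ᵥ S.vecE f F := by
  rw [vecE, star_mulVec, H.conjTranspose_tensorE, dotProduct_mulVec]

lemma wdiv_vecE : S.wdiv f (S.vecE f F) = (S.tensorE f F * (S.tensorE f F)ᴴ).trace
    + (n - 1) * (star (S.grad f) ⬝ᵥ S.vecE f F - star (S.vecD f) ⬝ᵥ S.grad f
      - star (S.vecG f F) ⬝ᵥ S.grad f - (κ - 2) * F * S.gradSq f) := by
  simp only [wdiv, H.div_vecE, H.gradBar_f, H.gradBar_g, add_dotProduct, smul_dotProduct,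
    smul_eq_mul, H.star_vecE_dotProduct_grad, S.star_grad_dotProduct_grad]
  ring

lemma wdiv_vecD : S.wdiv f (S.vecD f) = (S.tensorD f * (S.tensorD f)ᴴ).trace
    + n * (star (S.grad f) ⬝ᵥ S.vecD f)
    + (n + 2) * (star (S.grad f) ⬝ᵥ S.vecG f F - star (S.grad f) ⬝ᵥ S.vecE f F)
    - n * (κ - 2) * F * S.gradSq f := by
  rw [wdiv, H.div_vecD, H.gradBar_f]; ring

lemma wdiv_vecG : S.wdiv f (S.vecG f F) = star (S.vecD f) ⬝ᵥ S.grad f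
    + star (S.grad f) ⬝ᵥ S.vecE f F + (n + 1) * (star (S.vecG f F) ⬝ᵥ S.grad f)
    + (n - 2) * (star (S.grad f) ⬝ᵥ S.vecG f F) + (κ - 2) * F * S.gradSq f - n * S.g f F ^ 2
    - n * (2 * S.R f * S.gradSq f + κ * F * S.R f - S.R (S.R f)) := by
  simp only [wdiv, H.div_vecG, H.R_gradSq, H.gradBar_f, H.gradBar_g, add_dotProduct,
    smul_dotProduct, smul_eq_mul, H.star_vecE_dotProduct_grad, S.star_grad_dotProduct_grad]
  ring

lemma gradBar_coeff_vecE : S.gradBar (S.gradSq f + F + 2 * S.R f) =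
    star (S.vecD f) + star (S.vecE f F) - (2 : A) • star (S.vecG f F)
      + (3 * star (S.g f F) + (κ - 2) * F) • star (S.grad f) := by
  simp only [two_mul (S.R f), S.gradBar_add, H.gradBar_gradSq, H.gradBar_F, H.gradBar_R_f]
  rw [H.star_g, g]
  module

lemma gradBar_coeff_vecD : S.gradBar (S.gradSq f + F - 2 * S.R f) =
    star (S.vecD f) + star (S.vecE f F) + (2 : A) • star (S.vecG f F)
      + ((κ - 2) * F - star (S.g f F)) • star (S.grad f) := by
  simp only [two_mul (S.R f), S.gradBar_add, S.gradBar_sub, H.gradBar_gradSq, H.gradBar_F,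
    H.gradBar_R_f]
  rw [H.star_g, g]
  module

lemma gradBar_three_mul_R : S.gradBar (3 * S.R f) =
    (3 * star (S.g f F)) • star (S.grad f) - (3 : A) • star (S.vecG f F) := by
  have := S.gradBar_natCast_mul 3 (S.R f)
  rw [Nat.cast_ofNat] at this
  rw [this, H.gradBar_R_f]
  module

lemma wdiv_grad : S.wdiv f (S.grad f) = (2 * n - 2) * S.gradSq f - n * S.g f F := by
  rw [wdiv, H.gradBar_f, H.div_grad_f, S.star_grad_dotProduct_grad]; ring

lemma wdiv_gradSq_sq_smul_grad : S.wdiv f (S.gradSq f ^ 2 • S.grad f) =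
    2 * S.gradSq f * (star (S.vecD f) ⬝ᵥ S.grad f + star (S.grad f) ⬝ᵥ S.vecE f F)
    + S.gradSq f ^ 2 * ((2 * n + 2) * S.gradSq f - (n + 2) * S.g f F) := by
  rw [S.wdiv_smul, H.wdiv_grad, S.gradBar_pow, H.gradBar_gradSq]
  simp only [smul_dotProduct, add_dotProduct, smul_eq_mul, H.star_vecE_dotProduct_grad,
    S.star_grad_dotProduct_grad, Nat.cast_ofNat, Nat.add_one_sub_one, pow_one]
  ring

lemma wdiv_sq_smul_grad : S.wdiv f (F ^ 2 • S.grad f) =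
    F ^ 2 * ((2 * n - 2 + 2 * κ) * S.gradSq f - n * S.g f F) := by
  rw [S.wdiv_smul, H.wdiv_grad, S.gradBar_pow, H.gradBar_F]
  simp only [smul_dotProduct, smul_eq_mul, S.star_grad_dotProduct_grad, Nat.cast_ofNat,
    Nat.add_one_sub_one, pow_one]
  ring

lemma wdiv_R_smul_grad : S.wdiv f (S.R f • S.grad f) =
    star (S.g f F) * S.gradSq f - star (S.vecG f F) ⬝ᵥ S.grad f
    + S.R f * ((2 * n - 2) * S.gradSq f - n * S.g f F) := by
  rw [S.wdiv_smul, H.wdiv_grad, H.gradBar_R_f, sub_dotProduct, smul_dotProduct, smul_eq_mul,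
    S.star_grad_dotProduct_grad]

end IsLogSolution

section Evaluation

variable (φ : A →⋆ₐ[ℂ] ℂ)

/-- The value of a vector field under a character `φ` of the function algebra, which stands for
evaluation at a point. -/
def val (X : Fin n → A) : EuclideanSpace ℂ (Fin n) := WithLp.toLp 2 fun i => φ (X i)

lemma val_add (X Y : Fin n → A) : val φ (X + Y) = val φ X + val φ Y := by
  ext i; simp [val]

lemma val_sub (X Y : Fin n → A) : val φ (X - Y) = val φ X - val φ Y := by
  ext i; simp [val]

lemma val_smul (x : A) (X : Fin n → A) : val φ (x • X) = φ x • val φ X := by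
  ext i; simp [val]

lemma val_complex_smul (c : ℂ) (X : Fin n → A) : val φ (c • X) = c • val φ X := by
  ext i; simp [val]

lemma val_mulVec (M : Matrix (Fin n) (Fin n) A) (X : Fin n → A) (i : Fin n) :
    val φ (M *ᵥ X) i = φ (M i ⬝ᵥ X) := rfl

lemma inner_val (X Y : Fin n → A) : inner ℂ (val φ X) (val φ Y) = φ (star X ⬝ᵥ Y) := by
  simp [val, EuclideanSpace.inner_eq_star_dotProduct, dotProduct, map_star φ, mul_comm]

lemma map_star_dotProduct_self (X : Fin n → A) :
    φ (star X ⬝ᵥ X) = ((‖val φ X‖ ^ 2 : ℝ) : ℂ) := by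
  rw [← inner_val, inner_self_eq_norm_sq_to_K]; norm_cast

lemma conj_map_star_dotProduct (X Y : Fin n → A) :
    (starRingEnd ℂ) (φ (star X ⬝ᵥ Y)) = φ (star Y ⬝ᵥ X) := by
  rw [← inner_val, ← inner_val, inner_conj_symm]

lemma norm_val_star (X : Fin n → A) : ‖val φ (star X)‖ = ‖val φ X‖ := by
  simp [val, EuclideanSpace.norm_eq, map_star φ]

lemma norm_map_dotProduct_le (X Y : Fin n → A) : ‖φ (X ⬝ᵥ Y)‖ ≤ ‖val φ X‖ * ‖val φ Y‖ := by
  rw [← norm_val_star φ X, ← star_star X, ← inner_val, star_star]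
  exact norm_inner_le_norm _ _

lemma map_trace_mul_conjTranspose (M : Matrix (Fin n) (Fin n) A) :
    φ (M * Mᴴ).trace = ((∑ i, ‖val φ (M i)‖ ^ 2 : ℝ) : ℂ) := by
  simp only [trace, diag, mul_apply', conjTranspose, map_sum, Complex.ofReal_sum,
    ← map_star_dotProduct_self, dotProduct_comm (star _)]
  rfl

lemma norm_val_mulVec_sq_le (M : Matrix (Fin n) (Fin n) A) (X : Fin n → A) :
    ‖val φ (M *ᵥ X)‖ ^ 2 ≤ (φ (M * Mᴴ).trace).re * ‖val φ X‖ ^ 2 := by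
  rw [map_trace_mul_conjTranspose, Complex.ofReal_re, EuclideanSpace.norm_sq_eq, Finset.sum_mul]
  refine Finset.sum_le_sum fun i _ => ?_
  rw [val_mulVec, ← mul_pow]
  gcongr
  exact norm_map_dotProduct_le φ _ _

lemma ofReal_re_map {x : A} (hx : star x = x) : ((φ x).re : ℂ) = φ x :=
  Complex.conj_eq_iff_re.1 <| by rw [starRingEnd_apply, ← map_star, hx]

lemma ofReal_im_map_mul_I {x : A} (hx : star x = -x) : ((φ x).im : ℂ) * I = φ x := by
  have hre : (φ x).re = -(φ x).re := by
    simpa using congrArg Complex.re ((map_star φ x).symm.trans (congrArg φ hx))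
  apply Complex.ext <;> simp
  linarith

end Evaluation

namespace IsLogSolution

variable {S} {κ f F : A} (H : S.IsLogSolution κ f F) {φ : A →⋆ₐ[ℂ] ℂ}
include H

lemma map_R_f : φ (S.R f) = ((φ (S.R f)).im : ℂ) * I :=
  (ofReal_im_map_mul_I φ (by rw [S.star_R, H.star_f])).symm

lemma map_R_R_f : φ (S.R (S.R f)) = ((φ (S.R (S.R f))).re : ℂ) :=
  (ofReal_re_map φ (by rw [S.star_R, S.star_R, H.star_f, map_neg, neg_neg])).symm

lemma map_F : φ F = ((φ F).re : ℂ) := (ofReal_re_map φ H.star_F).symm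

lemma map_grad_dotProduct_vecE :
    φ (star (S.grad f) ⬝ᵥ S.vecE f F) = ((φ (star (S.grad f) ⬝ᵥ S.vecE f F)).re : ℂ) := by
  refine (Complex.conj_eq_iff_re.1 ?_).symm
  rw [conj_map_star_dotProduct, H.star_vecE_dotProduct_grad]

lemma map_g : φ (S.g f F) =
    ((‖val φ (S.grad f)‖ ^ 2 : ℝ) : ℂ) + ((φ F).re : ℂ) - ((φ (S.R f)).im : ℂ) * I := by
  rw [g, map_sub, map_add, gradSq, map_star_dotProduct_self, ← H.map_F, ← H.map_R_f]

lemma wdiv_vecW : S.wdiv f (S.vecW f F) =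
    (S.gradSq f + F + 2 * S.R f) * S.wdiv f (S.vecE f F)
    + (S.gradSq f + F - 2 * S.R f) * S.wdiv f (S.vecD f) - 3 * S.R f * S.wdiv f (S.vecG f F)
    + star (S.vecD f) ⬝ᵥ S.vecE f F + star (S.vecE f F) ⬝ᵥ S.vecE f F
    - 2 * (star (S.vecG f F) ⬝ᵥ S.vecE f F) + star (S.vecD f) ⬝ᵥ S.vecD f
    + star (S.vecE f F) ⬝ᵥ S.vecD f + 2 * (star (S.vecG f F) ⬝ᵥ S.vecD f)
    + 3 * (star (S.vecG f F) ⬝ᵥ S.vecG f F)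
    + (3 * star (S.g f F) + (κ - 2) * F) * (star (S.grad f) ⬝ᵥ S.vecE f F)
    + ((κ - 2) * F - star (S.g f F)) * (star (S.grad f) ⬝ᵥ S.vecD f)
    - 3 * star (S.g f F) * (star (S.grad f) ⬝ᵥ S.vecG f F) := by
  rw [vecW, S.wdiv_sub, S.wdiv_add, S.wdiv_smul, S.wdiv_smul, S.wdiv_smul, H.gradBar_coeff_vecE,
    H.gradBar_coeff_vecD, H.gradBar_three_mul_R]
  simp only [add_dotProduct, sub_dotProduct, smul_dotProduct, smul_eq_mul]
  ring

variable {k : ℝ} (hk : φ κ = k)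
include hk

lemma re_map_wdiv_vecW : (φ (S.wdiv f (S.vecW f F))).re =
    (‖val φ (S.grad f)‖ ^ 2 + (φ F).re) * ((φ (S.tensorD f * (S.tensorD f)ᴴ).trace).re
      + (φ (S.tensorE f F * (S.tensorE f F)ᴴ).trace).re)
    + ‖val φ (S.vecD f) + val φ (S.vecE f F)‖ ^ 2 + 3 * ‖val φ (S.vecG f F)‖ ^ 2
    + 2 * (inner ℂ (val φ (S.vecG f F)) (val φ (S.vecD f) - val φ (S.vecE f F))).re
    - (2 - k) * (φ F).re * (inner ℂ (val φ (S.grad f)) (val φ (S.vecD f) + val φ (S.vecE f F))).re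
    + (2 * n - 1) * (2 - k) * (φ F).re * ‖val φ (S.grad f)‖ ^ 2
      * (‖val φ (S.grad f)‖ ^ 2 + (φ F).re)
    + 3 * n * (2 - k) * (φ F).re * (φ (S.R f)).im ^ 2 := by
  rw [norm_add_sq (𝕜 := ℂ), inner_sub_right, inner_add_right, H.wdiv_vecW, H.wdiv_vecE,
    H.wdiv_vecD, H.wdiv_vecG]
  have star_vecE_vecD := conj_map_star_dotProduct φ (S.vecD f) (S.vecE f F)
  have star_vecD_grad := conj_map_star_dotProduct φ (S.grad f) (S.vecD f)
  have star_vecG_grad := conj_map_star_dotProduct φ (S.grad f) (S.vecG f F)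
  simp only [map_add, map_sub, map_mul, map_pow, map_natCast, map_ofNat, map_one, map_star φ,
    gradSq, map_star_dotProduct_self, map_trace_mul_conjTranspose, inner_val, ← star_vecE_vecD,
    ← star_vecD_grad, ← star_vecG_grad, H.map_g, hk]
  rw [H.map_F, H.map_R_f, H.map_R_R_f, H.map_grad_dotProduct_vecE]
  simp only [Complex.ofReal_re]
  simp [pow_two, Complex.mul_re, Complex.mul_im]
  ring

omit hk in
lemma re_map_wdiv_gradSq_sq_smul_grad : (φ (S.wdiv f (S.gradSq f ^ 2 • S.grad f))).re =
    n * ‖val φ (S.grad f)‖ ^ 6 - (n + 2) * ‖val φ (S.grad f)‖ ^ 4 * (φ F).re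
    + 2 * ‖val φ (S.grad f)‖ ^ 2
      * (inner ℂ (val φ (S.grad f)) (val φ (S.vecD f) + val φ (S.vecE f F))).re := by
  rw [inner_add_right, H.wdiv_gradSq_sq_smul_grad]
  have star_vecD_grad := conj_map_star_dotProduct φ (S.grad f) (S.vecD f)
  simp only [map_add, map_sub, map_mul, map_pow, map_natCast, map_ofNat, gradSq,
    map_star_dotProduct_self, inner_val, ← star_vecD_grad, H.map_g]
  simp [pow_two, Complex.mul_re, Complex.mul_im]
  ring

lemma re_map_wdiv_sq_smul_grad : (φ (S.wdiv f (F ^ 2 • S.grad f))).re =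
    (n - 2 + 2 * k) * (φ F).re ^ 2 * ‖val φ (S.grad f)‖ ^ 2 - n * (φ F).re ^ 3 := by
  rw [H.wdiv_sq_smul_grad]
  simp only [map_add, map_sub, map_mul, map_pow, map_natCast, map_ofNat, gradSq,
    map_star_dotProduct_self, H.map_g, hk]
  rw [H.map_F]
  simp [pow_two, Complex.mul_re, Complex.mul_im]
  ring

omit hk in
lemma re_map_wdiv_R_smul_grad : (φ (S.wdiv f (S.R f • S.grad f))).re =
    ‖val φ (S.grad f)‖ ^ 2 * (‖val φ (S.grad f)‖ ^ 2 + (φ F).re)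
    - (inner ℂ (val φ (S.vecG f F)) (val φ (S.grad f))).re - n * (φ (S.R f)).im ^ 2 := by
  rw [H.wdiv_R_smul_grad]
  simp only [map_add, map_sub, map_mul, map_star φ, map_natCast, map_ofNat, gradSq,
    map_star_dotProduct_self, inner_val, H.map_g]
  rw [H.map_R_f]
  simp [pow_two, Complex.mul_re, Complex.mul_im]
  ring

lemma coercive (hn : 1 ≤ n) (hk0 : 0 < k) (hk2 : k < 2) (hF : 0 ≤ (φ F).re) :
    coercivity n k / 2 * (‖val φ (S.vecD f)‖ ^ 2 + ‖val φ (S.vecE f F)‖ ^ 2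
      + ‖val φ (S.vecG f F)‖ ^ 2 + ‖val φ (S.grad f)‖ ^ 6 + (φ F).re ^ 3) ≤
      (φ (S.wdiv f (S.vecM f F (coercivity n k : ℂ)))).re := by
  have trace_nonneg (M : Matrix (Fin n) (Fin n) A) : 0 ≤ (φ (M * Mᴴ).trace).re := by
    rw [map_trace_mul_conjTranspose, Complex.ofReal_re]; positivity
  have hD := norm_val_mulVec_sq_le φ (S.tensorD f) (star (S.grad f))
  rw [norm_val_star] at hD
  rw [vecM, S.wdiv_add, S.wdiv_complex_smul, S.wdiv_sub, map_add, map_smul, map_sub, smul_eq_mul,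
    Complex.add_re, Complex.re_ofReal_mul, Complex.sub_re, H.re_map_wdiv_vecW hk,
    H.re_map_wdiv_gradSq_sq_smul_grad, H.re_map_wdiv_sq_smul_grad hk]
  exact coercive_of_norm_sq_le hn hk0 hk2 _ _ hF (trace_nonneg _) (trace_nonneg _) hD
    (norm_val_mulVec_sq_le φ (S.tensorE f F) (S.grad f))

omit hk in
lemma norm_map_R : ‖φ (S.R f)‖ = |(φ (S.R f)).im| := by
  rw [H.map_R_f, norm_mul, Complex.norm_I, mul_one, Complex.norm_real, Real.norm_eq_abs,
    ← H.map_R_f]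

omit hk in
lemma norm_val_vecW_le (hF : 0 ≤ (φ F).re) : ‖val φ (S.vecW f F)‖ ≤
    (‖val φ (S.grad f)‖ ^ 2 + (φ F).re + 2 * |(φ (S.R f)).im|)
      * (‖val φ (S.vecD f)‖ + ‖val φ (S.vecE f F)‖)
      + 3 * |(φ (S.R f)).im| * ‖val φ (S.vecG f F)‖ := by
  have hnorm : ‖φ (S.gradSq f) + φ F‖ = ‖val φ (S.grad f)‖ ^ 2 + (φ F).re := by
    rw [gradSq, map_star_dotProduct_self, H.map_F, ← Complex.ofReal_add, Complex.norm_real,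
      Real.norm_of_nonneg (by positivity), Complex.ofReal_re]
  have hR : ‖φ (2 * S.R f)‖ = 2 * |(φ (S.R f)).im| := by
    rw [map_mul, map_ofNat, norm_mul, H.norm_map_R, RCLike.norm_ofNat]
  have hadd := norm_add_le (φ (S.gradSq f) + φ F) (φ (2 * S.R f))
  have hsub := norm_sub_le (φ (S.gradSq f) + φ F) (φ (2 * S.R f))
  rw [hnorm, hR] at hadd hsub
  simp only [vecW, val_sub, val_add, val_smul, map_add, map_sub, map_mul φ 3, map_ofNat]
  calc _ ≤ ‖φ (S.gradSq f) + φ F + φ (2 * S.R f)‖ * ‖val φ (S.vecE f F)‖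
        + ‖φ (S.gradSq f) + φ F - φ (2 * S.R f)‖ * ‖val φ (S.vecD f)‖
        + ‖3 * φ (S.R f)‖ * ‖val φ (S.vecG f F)‖ := by
        simp only [← norm_smul]
        exact (norm_sub_le _ _).trans (by gcongr; exact norm_add_le _ _)
    _ ≤ (‖val φ (S.grad f)‖ ^ 2 + (φ F).re + 2 * |(φ (S.R f)).im|) * ‖val φ (S.vecE f F)‖
        + (‖val φ (S.grad f)‖ ^ 2 + (φ F).re + 2 * |(φ (S.R f)).im|) * ‖val φ (S.vecD f)‖
        + 3 * |(φ (S.R f)).im| * ‖val φ (S.vecG f F)‖ := by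
        rw [norm_mul, H.norm_map_R, RCLike.norm_ofNat]
        gcongr
    _ = _ := by ring

omit hk in
lemma norm_val_vecM_le {δ : ℝ} (hδ : 0 ≤ δ) (hF : 0 ≤ (φ F).re) : ‖val φ (S.vecM f F δ)‖ ≤
    (‖val φ (S.grad f)‖ ^ 2 + (φ F).re + 2 * |(φ (S.R f)).im|)
      * (‖val φ (S.vecD f)‖ + ‖val φ (S.vecE f F)‖)
      + 3 * |(φ (S.R f)).im| * ‖val φ (S.vecG f F)‖
      + δ * (‖val φ (S.grad f)‖ ^ 4 + (φ F).re ^ 2) * ‖val φ (S.grad f)‖ := by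
  have hgradSq : ‖φ (S.gradSq f ^ 2)‖ = ‖val φ (S.grad f)‖ ^ 4 := by
    rw [map_pow, gradSq, map_star_dotProduct_self, norm_pow, Complex.norm_real, norm_pow,
      norm_norm, ← pow_mul]
  have hFsq : ‖φ (F ^ 2)‖ = (φ F).re ^ 2 := by
    rw [map_pow, norm_pow, H.map_F, Complex.norm_real, Complex.ofReal_re, Real.norm_eq_abs, sq_abs]
  rw [vecM, val_add, val_complex_smul, val_sub, val_smul, val_smul]
  refine (norm_add_le _ _).trans (add_le_add (H.norm_val_vecW_le hF) ?_)
  rw [norm_smul, Complex.norm_real, Real.norm_of_nonneg hδ, mul_assoc]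
  gcongr
  refine (norm_sub_le _ _).trans_eq ?_
  rw [norm_smul, norm_smul, hgradSq, hFsq, add_mul]

end IsLogSolution

section TestField

/-- The coercive field `e M` cut off by a power of `η`; the second term has a divergence which
controls `|∂_t f|²`. -/
def testField (f F e η : A) (σ : ℕ) (δ c : ℂ) : Fin n → A :=
  e • (η ^ (σ + 6) • S.vecM f F δ - c • (η ^ (σ + 4) • (S.R f • S.grad f)))

lemma div_testField {f e : A} (F η : A) (σ : ℕ) (δ c : ℂ)
    (he : S.gradBar e = ((2 * n - 2) * e) • S.gradBar f) :
    S.div (S.testField f F e η σ δ c) = e * (η ^ σ *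
      (η ^ 6 * S.wdiv f (S.vecM f F δ) + (σ + 6) * η ^ 5 * (S.gradBar η ⬝ᵥ S.vecM f F δ)
      - c • (η ^ 4 * S.wdiv f (S.R f • S.grad f)
        + (σ + 4) * η ^ 3 * (S.gradBar η ⬝ᵥ (S.R f • S.grad f))))) := by
  rw [testField, S.div_weight_smul f he, S.wdiv_sub, S.wdiv_complex_smul, S.wdiv_smul,
    S.wdiv_smul, S.gradBar_pow, S.gradBar_pow, smul_dotProduct, smul_dotProduct]
  simp only [smul_eq_mul, Algebra.smul_def c, Nat.cast_add, Nat.cast_ofNat,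
    show σ + 6 - 1 = σ + 5 from rfl,
    show σ + 4 - 1 = σ + 3 from rfl]
  ring

variable {S} {κ f F e η : A} (H : S.IsLogSolution κ f F) {φ : A →⋆ₐ[ℂ] ℂ} {k : ℝ} (hk : φ κ = k)
include H hk

lemma le_re_map_div_testField (hn : 1 ≤ n) (hk0 : 0 < k) (hk2 : k < 2) {σ : ℕ} {Λ C : ℝ}
    (hcut : IsCutoffConstant (coercivity n k) (σ + 6) Λ C) (hΛ : 0 ≤ Λ)
    (he : S.gradBar e = ((2 * n - 2) * e) • S.gradBar f) {eu h r : ℝ} (hF : 0 ≤ (φ F).re)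
    (heu : φ e = eu) (heu0 : 0 ≤ eu) (hη : φ η = h) (hh : 0 ≤ h) (hr : 0 ≤ r)
    (hω : ‖val φ (S.gradBar η)‖ ≤ r) :
    eu * (h ^ σ * (coercivity n k / 4 * (h ^ 2 * (φ F).re) ^ 3 - C * r ^ 6)) ≤
      (φ (S.div (S.testField f F e η σ (coercivity n k : ℂ) ((Λ * r ^ 2 : ℝ) : ℂ)))).re := by
  have hn' : (1 : ℝ) ≤ n := by exact_mod_cast hn
  have hδ := (coercivity_pos (n := n) hk0 hk2).le
  have contract {X : Fin n → A} {b : ℝ} (hX : ‖val φ X‖ ≤ b) :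
      |(φ (S.gradBar η ⬝ᵥ X)).re| ≤ r * b :=
    (Complex.abs_re_le_norm _).trans <| (norm_map_dotProduct_le φ _ _).trans <| by gcongr
  have hωM := neg_le_of_abs_le (contract (H.norm_val_vecM_le hδ hF))
  have hωU := le_of_abs_le <| contract (X := S.R f • S.grad f) <| le_of_eq <| by
    rw [val_smul, norm_smul, H.norm_map_R]
  have hdivU : (φ (S.wdiv f (S.R f • S.grad f))).re ≤
      ‖val φ (S.vecG f F)‖ * ‖val φ (S.grad f)‖
      + ‖val φ (S.grad f)‖ ^ 2 * (‖val φ (S.grad f)‖ ^ 2 + (φ F).re) - |(φ (S.R f)).im| ^ 2 := by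
    have ht : 1 * (φ (S.R f)).im ^ 2 ≤ n * (φ (S.R f)).im ^ 2 := by gcongr
    rw [H.re_map_wdiv_R_smul_grad, sq_abs]
    linarith [neg_norm_mul_norm_le_re_inner (val φ (S.vecG f F)) (val φ (S.grad f))]
  have key := hcut.le_of_bounds (by linarith [σ.cast_nonneg (α := ℝ)]) hΛ (norm_nonneg _) hF
    (abs_nonneg _) hr hh
    (H.coercive hk hn hk0 hk2 hF) hωM hdivU hωU
  have hre : (φ (S.div (S.testField f F e η σ (coercivity n k : ℂ) ((Λ * r ^ 2 : ℝ) : ℂ)))).re =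
      eu * (h ^ σ * (h ^ 6 * (φ (S.wdiv f (S.vecM f F (coercivity n k : ℂ)))).re
        + (σ + 6) * h ^ 5 * (φ (S.gradBar η ⬝ᵥ S.vecM f F (coercivity n k : ℂ))).re
        - Λ * r ^ 2 * (h ^ 4 * (φ (S.wdiv f (S.R f • S.grad f))).re
          + (σ + 6 - 2) * h ^ 3 * (φ (S.gradBar η ⬝ᵥ (S.R f • S.grad f))).re))) := by
    rw [S.div_testField F η σ _ _ he]
    simp only [map_mul, map_add, map_sub, map_pow, map_smul, map_natCast, map_ofNat, heu, hη,
      smul_eq_mul]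
    norm_cast
    simp only [Complex.re_ofReal_mul, Complex.sub_re, Complex.add_re]
    push_cast
    ring
  rw [hre]
  gcongr

end TestField

end HeisFrame

namespace Heis

variable {n : ℕ}

/-- The algebra of smooth complex-valued functions on `ℍⁿ`, with complex conjugation as star. -/
def smoothAlgebra (n : ℕ) : StarSubalgebra ℂ (Heis n → ℂ) where
  carrier := {f | ContDiff ℝ (⊤ : ℕ∞) f}
  mul_mem' {f g} (hf : ContDiff ℝ (⊤ : ℕ∞) f) (hg : ContDiff ℝ (⊤ : ℕ∞) g) := hf.mul hg
  add_mem' {f g} (hf : ContDiff ℝ (⊤ : ℕ∞) f) (hg : ContDiff ℝ (⊤ : ℕ∞) g) := hf.add hg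
  algebraMap_mem' c := show ContDiff ℝ (⊤ : ℕ∞) fun _ => c from contDiff_const
  star_mem' {f} (hf : ContDiff ℝ (⊤ : ℕ∞) f) := Complex.conjCLE.contDiff.comp hf

/-- The smooth complex-valued functions on `ℍⁿ`. -/
abbrev SmoothFun (n : ℕ) : Type := smoothAlgebra n

/-- Evaluation at a point. -/
def eval (q : Heis n) : SmoothFun n →⋆ₐ[ℂ] ℂ where
  toFun f := f.1 q
  map_one' := rfl
  map_mul' _ _ := rfl
  map_zero' := rfl
  map_add' _ _ := rfl
  commutes' _ := rfl
  map_star' _ := rfl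

lemma smoothFun_ext {f g : SmoothFun n} (h : ∀ q, eval q f = eval q g) : f = g :=
  Subtype.ext (funext h)

lemma contDiff_smoothFun (f : SmoothFun n) : ContDiff ℝ (⊤ : ℕ∞) f.1 := f.2

lemma differentiableAt_smoothFun (f : SmoothFun n) (q : Heis n) : DifferentiableAt ℝ f.1 q :=
  (contDiff_smoothFun f).differentiable (by simp) q

lemma contDiff_fderiv_apply {F : Type*} [NormedAddCommGroup F] [NormedSpace ℝ F] {f : Heis n → F}
    (hf : ContDiff ℝ (⊤ : ℕ∞) f) (v : Heis n) :
    ContDiff ℝ (⊤ : ℕ∞) fun q => fderiv ℝ f q v :=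
  (hf.fderiv_right (m := (⊤ : ℕ∞)) (by simp)).clm_apply contDiff_const

/-- The derivative in a constant direction, as a derivation of the algebra of smooth functions. -/
def dirDeriv (v : Heis n) : Derivation ℂ (SmoothFun n) (SmoothFun n) :=
  Derivation.mk'
    { toFun := fun f => ⟨fun q => fderiv ℝ f.1 q v, contDiff_fderiv_apply f.2 v⟩
      map_add' := fun f g => smoothFun_ext fun q => congrArg (· v)
        (fderiv_add (differentiableAt_smoothFun f q) (differentiableAt_smoothFun g q))
      map_smul' := fun c f => smoothFun_ext fun q => congrArg (· v)
        (fderiv_const_smul (differentiableAt_smoothFun f q) c) }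
    fun f g => smoothFun_ext fun q => congrArg (· v)
      (fderiv_mul (differentiableAt_smoothFun f q) (differentiableAt_smoothFun g q))

lemma eval_dirDeriv (v q : Heis n) (f : SmoothFun n) : eval q (dirDeriv v f) = fderiv ℝ f.1 q v :=
  rfl

lemma dirDeriv_comm (v w : Heis n) (f : SmoothFun n) :
    dirDeriv v (dirDeriv w f) = dirDeriv w (dirDeriv v f) := by
  refine smoothFun_ext fun q => ?_
  have hd : DifferentiableAt ℝ (fderiv ℝ f.1) q :=
    ((contDiff_smoothFun f).fderiv_right (m := (⊤ : ℕ∞)) (by simp)).differentiable (by simp) q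
  have second (v w : Heis n) :
      eval q (dirDeriv v (dirDeriv w f)) = fderiv ℝ (fderiv ℝ f.1) q v w := by
    change fderiv ℝ (fun q => fderiv ℝ f.1 q w) q v = _
    simp [fderiv_clm_apply hd (differentiableAt_const w)]
  rw [second, second]
  refine ((contDiff_smoothFun f).contDiffAt.isSymmSndFDerivAt ?_) v w
  rw [minSmoothness_of_isRCLikeNormedField]
  exact WithTop.coe_le_coe.2 le_top

lemma star_dirDeriv (v : Heis n) (f : SmoothFun n) :
    star (dirDeriv v f) = dirDeriv v (star f) :=
  smoothFun_ext fun q => congrArg (· v) (Complex.conjCLE.comp_fderiv (f := f.1) (x := q)).symm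

/-- The coordinate function `(z, t) ↦ z_j`. -/
def coord (j : Fin n) : SmoothFun n := ⟨fun q => q.1 j, by
  change ContDiff ℝ (⊤ : ℕ∞) fun q : Heis n => q.1 j; fun_prop⟩

lemma eval_coord (q : Heis n) (j : Fin n) : eval q (coord j) = q.1 j := rfl

lemma dirDeriv_coord (v : Heis n) (j : Fin n) :
    dirDeriv v (coord j) = algebraMap ℂ (SmoothFun n) (v.1 j) := by
  refine smoothFun_ext fun q => ?_
  let L : Heis n →L[ℝ] ℂ := .comp (.proj j) (.fst ℝ (Fin n → ℂ) ℝ)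
  exact congrArg (· v) (L.hasFDerivAt (x := q)).fderiv

lemma dirDeriv_star_coord (v : Heis n) (j : Fin n) :
    dirDeriv v (star (coord j)) = algebraMap ℂ (SmoothFun n) (star (v.1 j)) := by
  rw [← star_dirDeriv, dirDeriv_coord, algebraMap_star_comm]

/-- The direction `∂/∂x_j`. -/
def dirX (j : Fin n) : Heis n := (Pi.single j 1, 0)

/-- The direction `∂/∂y_j`. -/
def dirY (j : Fin n) : Heis n := (Pi.single j I, 0)

/-- The direction `∂/∂t`. -/
def dirT : Heis n := (0, 1)

/-- The vector field `Z_j = (X_j - i Y_j) / 2`. -/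
def vecZ (j : Fin n) : Derivation ℂ (SmoothFun n) (SmoothFun n) :=
  (1 / 2 : ℂ) • (dirDeriv (dirX j) - I • dirDeriv (dirY j)) +
    I • star (coord j) • dirDeriv dirT

/-- The vector field `Z̄_j = (X_j + i Y_j) / 2`. -/
def vecZBar (j : Fin n) : Derivation ℂ (SmoothFun n) (SmoothFun n) :=
  (1 / 2 : ℂ) • (dirDeriv (dirX j) + I • dirDeriv (dirY j)) - I • coord j • dirDeriv dirT

lemma vecZ_apply (j : Fin n) (f : SmoothFun n) : vecZ j f =
    (1 / 2 : ℂ) • (dirDeriv (dirX j) f - I • dirDeriv (dirY j) f) +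
      I • (star (coord j) * dirDeriv dirT f) := rfl

lemma vecZBar_apply (j : Fin n) (f : SmoothFun n) : vecZBar j f =
    (1 / 2 : ℂ) • (dirDeriv (dirX j) f + I • dirDeriv (dirY j) f) -
      I • (coord j * dirDeriv dirT f) := rfl

lemma star_vecZ (j : Fin n) (f : SmoothFun n) : star (vecZ j f) = vecZBar j (star f) := by
  simp only [vecZ_apply, vecZBar_apply, star_add, star_sub, star_smul, star_mul', star_star,
    star_dirDeriv, star_div₀, star_one, star_ofNat, Complex.star_def, conj_I]
  module

lemma dirDeriv_dirX_coord (i j : Fin n) :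
    dirDeriv (dirX i) (coord j) = if i = j then 1 else 0 := by
  rcases eq_or_ne i j with rfl | hij <;> simp [dirDeriv_coord, dirX, *]

lemma dirDeriv_dirX_star_coord (i j : Fin n) :
    dirDeriv (dirX i) (star (coord j)) = if i = j then 1 else 0 := by
  rcases eq_or_ne i j with rfl | hij <;> simp [dirDeriv_star_coord, dirX, *]

lemma dirDeriv_dirY_coord (i j : Fin n) :
    dirDeriv (dirY i) (coord j) = if i = j then I • 1 else 0 := by
  rcases eq_or_ne i j with rfl | hij <;>
    simp [dirDeriv_coord, dirY, Algebra.algebraMap_eq_smul_one, *]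

lemma dirDeriv_dirY_star_coord (i j : Fin n) :
    dirDeriv (dirY i) (star (coord j)) = if i = j then -(I • 1) else 0 := by
  rcases eq_or_ne i j with rfl | hij <;>
    simp [dirDeriv_star_coord, dirY, Algebra.algebraMap_eq_smul_one, *]

lemma dirDeriv_dirT_coord (j : Fin n) : dirDeriv dirT (coord j) = 0 := by
  simp [dirDeriv_coord, dirT]

lemma dirDeriv_dirT_star_coord (j : Fin n) : dirDeriv dirT (star (coord j)) = 0 := by
  simp [dirDeriv_star_coord, dirT]

lemma vecZ_comm (i j : Fin n) (f : SmoothFun n) : vecZ i (vecZ j f) = vecZ j (vecZ i f) := by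
  rcases eq_or_ne i j with rfl | hij
  · rfl
  simp only [vecZ_apply, map_add, map_sub, Derivation.map_smul, Derivation.leibniz, smul_eq_mul,
    dirDeriv_dirX_star_coord, dirDeriv_dirY_star_coord, dirDeriv_dirT_star_coord, hij, hij.symm,
    if_false, dirDeriv_comm dirT, dirDeriv_comm (dirX j) (dirX i),
    dirDeriv_comm (dirX j) (dirY i), dirDeriv_comm (dirY j) (dirX i),
    dirDeriv_comm (dirY j) (dirY i)]
  algebra

lemma vecZBar_vecZ_self (j : Fin n) (f : SmoothFun n) :
    vecZBar j (vecZ j f) = vecZ j (vecZBar j f) + 2 * (I • dirDeriv dirT f) := by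
  simp only [vecZ_apply, vecZBar_apply, map_add, map_sub, Derivation.map_smul,
    Derivation.leibniz, smul_eq_mul, dirDeriv_dirX_coord, dirDeriv_dirX_star_coord,
    dirDeriv_dirY_coord, dirDeriv_dirY_star_coord, dirDeriv_dirT_coord,
    dirDeriv_dirT_star_coord, dirDeriv_comm dirT, dirDeriv_comm (dirY j) (dirX j), if_true,
    smul_neg, smul_smul, I_mul_I]
  algebra

lemma vecZBar_vecZ (i j : Fin n) (f : SmoothFun n) : vecZBar i (vecZ j f) =
    vecZ j (vecZBar i f) + if i = j then 2 * (I • dirDeriv dirT f) else 0 := by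
  rcases eq_or_ne i j with rfl | hij
  · rw [if_pos rfl, vecZBar_vecZ_self]
  simp only [vecZ_apply, vecZBar_apply, map_add, map_sub, Derivation.map_smul,
    Derivation.leibniz, smul_eq_mul, dirDeriv_dirX_coord, dirDeriv_dirX_star_coord,
    dirDeriv_dirY_coord, dirDeriv_dirY_star_coord, dirDeriv_dirT_coord,
    dirDeriv_dirT_star_coord, hij, hij.symm, if_false, dirDeriv_comm dirT,
    dirDeriv_comm (dirX j) (dirX i), dirDeriv_comm (dirX j) (dirY i),
    dirDeriv_comm (dirY j) (dirX i), dirDeriv_comm (dirY j) (dirY i)]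
  algebra

lemma dirDeriv_dirT_vecZ (j : Fin n) (f : SmoothFun n) :
    dirDeriv dirT (vecZ j f) = vecZ j (dirDeriv dirT f) := by
  simp only [vecZ_apply, map_add, map_sub, Derivation.map_smul, Derivation.leibniz, smul_eq_mul,
    dirDeriv_dirT_star_coord, dirDeriv_comm dirT, mul_zero, add_zero]

variable (n) in
/-- The frame of the CR vector fields `Z_j`, `Z̄_j` and `i ∂_t` on smooth functions. -/
def crFrame : HeisFrame n (SmoothFun n) where
  Z := vecZ
  Zb := vecZBar
  R := I • dirDeriv dirT
  star_Z := star_vecZ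
  star_R f := by simp [star_smul, star_dirDeriv]
  Z_comm := vecZ_comm
  Zb_Z := vecZBar_vecZ
  R_Z j f := by simp [dirDeriv_dirT_vecZ]

/-- A smooth real function as an element of the complex algebra `SmoothFun n`. -/
def realFun (u : Heis n → ℝ) (hu : ContDiff ℝ (⊤ : ℕ∞) u) : SmoothFun n :=
  ⟨fun q => (u q : ℂ), Complex.ofRealCLM.contDiff.comp hu⟩

section RealFunctions

variable {u : Heis n → ℝ} (hu : ContDiff ℝ (⊤ : ℕ∞) u)

lemma eval_realFun (q : Heis n) : eval q (realFun u hu) = u q := rfl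

lemma star_realFun : star (realFun u hu) = realFun u hu :=
  smoothFun_ext fun _ => Complex.conj_ofReal _

lemma eval_dirDeriv_realFun (v q : Heis n) :
    eval q (dirDeriv v (realFun u hu)) = (fderiv ℝ u q v : ℝ) := by
  have h := Complex.ofRealCLM.hasFDerivAt.comp q (hu.differentiable (by simp) q).hasFDerivAt
  exact congrArg (· v) h.fderiv

lemma XVec_eq (j : Fin n) (q : Heis n) : XVec j q = dirX j + (2 * (q.1 j).im) • dirT := by
  simp [XVec, dirX, dirT]

lemma YVec_eq (j : Fin n) (q : Heis n) : YVec j q = dirY j + (-2 * (q.1 j).re) • dirT := by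
  simp [YVec, dirY, dirT]

include hu

lemma contDiff_Xop (j : Fin n) : ContDiff ℝ (⊤ : ℕ∞) (Xop j u) :=
  (hu.fderiv_right (m := (⊤ : ℕ∞)) (by simp)).clm_apply <| contDiff_const.prodMk <|
    contDiff_const.mul (Complex.imCLM.contDiff.comp (contDiff_smoothFun (coord j)))

lemma contDiff_Yop (j : Fin n) : ContDiff ℝ (⊤ : ℕ∞) (Yop j u) :=
  (hu.fderiv_right (m := (⊤ : ℕ∞)) (by simp)).clm_apply <| contDiff_const.prodMk <|
    contDiff_const.mul (Complex.reCLM.contDiff.comp (contDiff_smoothFun (coord j)))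

lemma realFun_Xop (j : Fin n) : realFun (Xop j u) (contDiff_Xop hu j) =
    vecZ j (realFun u hu) + vecZBar j (realFun u hu) := by
  refine smoothFun_ext fun q => ?_
  simp only [vecZ_apply, vecZBar_apply, map_add, map_sub, map_smul, map_mul, map_star,
    eval_dirDeriv_realFun, eval_realFun, eval_coord, Xop, XVec_eq, smul_eq_mul, Complex.star_def]
  have hsub := Complex.sub_conj (q.1 j)
  push_cast at hsub ⊢
  linear_combination (I * fderiv ℝ u q dirT) * hsub +
    (2 * (q.1 j).im * fderiv ℝ u q dirT) * I_sq

lemma realFun_Yop (j : Fin n) : realFun (Yop j u) (contDiff_Yop hu j) =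
    I • (vecZ j (realFun u hu) - vecZBar j (realFun u hu)) := by
  refine smoothFun_ext fun q => ?_
  simp only [vecZ_apply, vecZBar_apply, map_add, map_sub, map_smul, map_mul, map_star,
    eval_dirDeriv_realFun, eval_realFun, eval_coord, Yop, YVec_eq, smul_eq_mul, Complex.star_def]
  have hadd := Complex.add_conj (q.1 j)
  push_cast at hadd ⊢
  linear_combination (fderiv ℝ u q dirT : ℂ) * hadd +
    (fderiv ℝ u q (dirY j) -
      (q.1 j + (starRingEnd ℂ) (q.1 j)) * fderiv ℝ u q dirT) * I_sq

lemma realFun_Xop_Xop_add_Yop_Yop (j : Fin n) :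
    realFun (Xop j (Xop j u)) (contDiff_Xop (contDiff_Xop hu j) j) +
        realFun (Yop j (Yop j u)) (contDiff_Yop (contDiff_Yop hu j) j) =
      4 * vecZBar j (vecZ j (realFun u hu)) - 4 * (crFrame n).R (realFun u hu) := by
  have comm := vecZBar_vecZ_self j (realFun u hu)
  rw [realFun_Xop (contDiff_Xop hu j), realFun_Yop (contDiff_Yop hu j), realFun_Xop hu,
    realFun_Yop hu]
  simp only [map_add, map_sub, Derivation.map_smul, smul_sub, smul_smul, I_mul_I,
    neg_smul, one_smul]
  change _ = _ - 4 * (I • dirDeriv dirT (realFun u hu))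
  linear_combination (-2 : SmoothFun n) * comm

lemma contDiff_subLap : ContDiff ℝ (⊤ : ℕ∞) (subLap u) :=
  ContDiff.sum fun j _ =>
    (contDiff_Xop (contDiff_Xop hu j) j).add (contDiff_Yop (contDiff_Yop hu j) j)

lemma realFun_subLap : realFun (subLap u) (contDiff_subLap hu) =
    4 * (crFrame n).div ((crFrame n).grad (realFun u hu)) -
      4 * n * (crFrame n).R (realFun u hu) := by
  have hsum : realFun (subLap u) (contDiff_subLap hu) =
      ∑ j, (realFun (Xop j (Xop j u)) (contDiff_Xop (contDiff_Xop hu j) j) +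
        realFun (Yop j (Yop j u)) (contDiff_Yop (contDiff_Yop hu j) j)) := by
    refine smoothFun_ext fun q => ?_
    simp [eval_realFun, subLap]
  rw [hsum, Finset.sum_congr rfl fun j _ => realFun_Xop_Xop_add_Yop_Yop hu j,
    Finset.sum_sub_distrib, ← Finset.mul_sum]
  simp only [Finset.sum_const, Finset.card_univ, Fintype.card_fin, nsmul_eq_mul]
  change 4 * (crFrame n).div ((crFrame n).grad (realFun u hu)) - _ = _
  ring

end RealFunctions

section LogPotential

variable {φ : Heis n → ℝ} (hφ : ContDiff ℝ (⊤ : ℕ∞) φ)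

include hφ in
lemma contDiff_exp_mul (c : ℝ) : ContDiff ℝ (⊤ : ℕ∞) fun q => Real.exp (c * φ q) :=
  (contDiff_const.mul hφ).exp

/-- The exponential `exp (c φ)` of a smooth real function `φ`, as an element of `SmoothFun n`. -/
def expFun (c : ℝ) : SmoothFun n :=
  realFun (fun q => Real.exp (c * φ q)) (contDiff_exp_mul hφ c)

lemma eval_expFun (c : ℝ) (q : Heis n) : eval q (expFun hφ c) = (Real.exp (c * φ q) : ℝ) := rfl

lemma star_expFun (c : ℝ) : star (expFun hφ c) = expFun hφ c := star_realFun _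

lemma expFun_add (c d : ℝ) : expFun hφ (c + d) = expFun hφ c * expFun hφ d :=
  smoothFun_ext fun q => by
    rw [map_mul, eval_expFun, eval_expFun, eval_expFun, add_mul, Real.exp_add, Complex.ofReal_mul]

lemma dirDeriv_expFun (c : ℝ) (v : Heis n) :
    dirDeriv v (expFun hφ c) =
      (algebraMap ℂ (SmoothFun n) c * expFun hφ c) * dirDeriv v (realFun φ hφ) := by
  refine smoothFun_ext fun q => ?_
  have h := ((hφ.differentiable (by simp) q).hasFDerivAt.const_mul c).exp
  rw [expFun, eval_dirDeriv_realFun, h.fderiv]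
  simp only [map_mul, eval_dirDeriv_realFun, eval_realFun, AlgHomClass.commutes,
    Algebra.algebraMap_self_apply, _root_.smul_apply, smul_eq_mul, Complex.ofReal_mul]
  ring

section ChainRule

variable {x y c : SmoothFun n} (h : ∀ v, dirDeriv v x = c * dirDeriv v y)
include h

lemma grad_of_dirDeriv : (crFrame n).grad x = c • (crFrame n).grad y := funext fun j => by
  change vecZ j x = c * vecZ j y
  simp only [vecZ_apply, h]
  algebra

lemma gradBar_of_dirDeriv : (crFrame n).gradBar x = c • (crFrame n).gradBar y := funext fun j => by
  change vecZBar j x = c * vecZBar j y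
  simp only [vecZBar_apply, h]
  algebra

lemma R_of_dirDeriv : (crFrame n).R x = c * (crFrame n).R y := by
  change I • dirDeriv dirT x = c * I • dirDeriv dirT y
  rw [h, mul_smul_comm]

end ChainRule

lemma realFun_subLap_exp (m : ℝ) :
    realFun (subLap fun q => Real.exp (m * φ q)) (contDiff_subLap (contDiff_exp_mul hφ m)) =
      4 * algebraMap ℂ (SmoothFun n) m * expFun hφ m *
        (algebraMap ℂ (SmoothFun n) m * (crFrame n).gradSq (realFun φ hφ) +
          (crFrame n).div ((crFrame n).grad (realFun φ hφ)) -
            n * (crFrame n).R (realFun φ hφ)) := by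
  have hgradSq : (crFrame n).gradBar (realFun φ hφ) ⬝ᵥ (crFrame n).grad (realFun φ hφ) =
      (crFrame n).gradSq (realFun φ hφ) := by
    rw [HeisFrame.gradSq, (crFrame n).star_grad, star_realFun]
  have hm : (crFrame n).gradBar (algebraMap ℂ (SmoothFun n) m * expFun hφ m) =
      (algebraMap ℂ (SmoothFun n) m * (algebraMap ℂ (SmoothFun n) m * expFun hφ m)) •
        (crFrame n).gradBar (realFun φ hφ) :=
    gradBar_of_dirDeriv fun v => by
      rw [Derivation.leibniz, Derivation.map_algebraMap, dirDeriv_expFun]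
      simp only [smul_eq_mul]
      ring
  have hU := dirDeriv_expFun hφ m
  rw [realFun_subLap (contDiff_exp_mul hφ m)]
  change 4 * (crFrame n).div ((crFrame n).grad (expFun hφ m)) -
    4 * n * (crFrame n).R (expFun hφ m) = _
  rw [grad_of_dirDeriv hU, R_of_dirDeriv hU, HeisFrame.div_smul, hm, smul_dotProduct, hgradSq]
  simp only [smul_eq_mul]
  ring

/-- The function `exp (k φ) / (4 n²)`, which is `u ^ (p - 1) / (4 n²)` when `φ = log u / n` and
`k = n (p - 1)`. -/
def potF (k : ℝ) : SmoothFun n := (1 / (4 * n ^ 2) : ℂ) • expFun hφ k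

lemma isLogSolution_of_subLap_exp (hn : n ≠ 0) {p : ℝ}
    (h : ∀ q, -subLap (fun q => Real.exp (n * φ q)) q = Real.exp (n * φ q) ^ p) :
    (crFrame n).IsLogSolution (algebraMap ℂ (SmoothFun n) (n * (p - 1) : ℝ)) (realFun φ hφ)
      (potF hφ (n * (p - 1))) where
  star_kappa := by rw [← algebraMap_star_comm, Complex.star_def, Complex.conj_ofReal]
  star_f := star_realFun hφ
  star_F := by simp [potF, star_expFun]
  grad_F := grad_of_dirDeriv fun v => by
    rw [potF, Derivation.map_smul, dirDeriv_expFun]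
    algebra
  R_F := R_of_dirDeriv fun v => by
    rw [potF, Derivation.map_smul, dirDeriv_expFun]
    algebra
  div_grad_f := by
    have hL : realFun (subLap fun q => Real.exp (n * φ q))
        (contDiff_subLap (contDiff_exp_mul hφ n)) =
        -(expFun hφ n * expFun hφ (n * (p - 1))) := by
      rw [← expFun_add]
      refine smoothFun_ext fun q => ?_
      rw [eval_realFun, map_neg, eval_expFun, ← Complex.ofReal_neg, neg_eq_iff_eq_neg.1 (h q),
        ← Real.exp_mul]
      ring_nf
    rw [realFun_subLap_exp hφ n] at hL
    have hn' : (n : ℂ) ≠ 0 := Nat.cast_ne_zero.2 hn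
    refine smoothFun_ext fun q => mul_left_cancel₀ (a := 4 * n * eval q (expFun hφ n)) ?_ ?_
    · rw [eval_expFun]
      exact mul_ne_zero (mul_ne_zero (by norm_num) hn')
        (Complex.ofReal_ne_zero.2 (Real.exp_ne_zero _))
    · have hq := congrArg (eval q) hL
      simp only [HeisFrame.g, potF, map_neg, map_add, map_sub, map_mul, map_smul, smul_eq_mul,
        map_natCast, map_ofNat, Complex.ofReal_natCast] at hq ⊢
      field_simp
      linear_combination hq

end LogPotential

/-- A weight `ψ` on `ℍⁿ` such that, for every cutoff `h`, the product `ψ h ^ σ` is a divergence up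
to an error of order `C r ^ (2 n + 4)`, where `r` bounds the horizontal gradient of `h`. The
exponent beats the homogeneous dimension `2 n + 2`. -/
def DivergenceBound (ψ : Heis n → ℝ) (σ : ℕ) (C : ℝ) : Prop :=
  ∀ ⦃h : Heis n → ℝ⦄ (hh : ContDiff ℝ (⊤ : ℕ∞) h) ⦃r : ℝ⦄, (∀ q, 0 ≤ h q) → (∀ q, h q ≤ 1) →
    0 ≤ r → r ≤ 1 →
    (∀ q, ‖HeisFrame.val (eval q) ((crFrame n).gradBar (realFun h hh))‖ ≤ r) →
    ∃ X : Fin n → SmoothFun n, (∀ i, Function.support (X i).1 ⊆ Function.support h) ∧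
      ∀ q, ψ q * h q ^ σ - C * r ^ (2 * n + 4) ≤ (eval q ((crFrame n).div X)).re

lemma exp_mul_eq_mul_rpow {k c : ℝ} (hk : k ≠ 0) (hc : 0 < c) (s x : ℝ) :
    Real.exp (s * x) = c ^ (s / k) * (Real.exp (k * x) / c) ^ (s / k) := by
  rw [← Real.mul_rpow hc.le (by positivity), mul_div_cancel₀ _ hc.ne', ← Real.exp_mul]
  field_simp

section

variable {φ : Heis n → ℝ} {hφ : ContDiff ℝ (⊤ : ℕ∞) φ}

lemma eval_potF (k : ℝ) (q : Heis n) :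
    eval q (potF hφ k) = (Real.exp (k * φ q) / (4 * n ^ 2) : ℝ) := by
  rw [potF, map_smul, eval_expFun, smul_eq_mul]
  push_cast
  ring

lemma eval_testField_of_eq_zero {f F e η : SmoothFun n} {σ : ℕ} {δ c : ℂ} {q : Heis n}
    (hη : eval q η = 0) (i : Fin n) :
    eval q ((crFrame n).testField f F e η σ δ c i) = 0 := by
  simp [HeisFrame.testField, hη]

lemma gradBar_expFun (hn : 1 ≤ n) : (crFrame n).gradBar (expFun hφ (2 * n - 2 : ℕ)) =
    ((2 * n - 2) * expFun hφ (2 * n - 2 : ℕ)) • (crFrame n).gradBar (realFun φ hφ) := by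
  have hcast : algebraMap ℂ (SmoothFun n) ((2 * n - 2 : ℕ) : ℝ) = 2 * n - 2 := by
    rw [Nat.cast_sub (by lia)]
    simp only [Nat.cast_mul, Nat.cast_ofNat, Complex.ofReal_sub, Complex.ofReal_mul,
      Complex.ofReal_ofNat, Complex.ofReal_natCast, map_sub, map_mul, map_ofNat, map_natCast]
  rw [← hcast]
  exact gradBar_of_dirDeriv (dirDeriv_expFun hφ _)

theorem exists_divergenceBound (hn : 1 ≤ n) {k : ℝ} (hk0 : 0 < k) (hk2 : k < 2)
    (H : (crFrame n).IsLogSolution (algebraMap ℂ (SmoothFun n) k) (realFun φ hφ) (potF hφ k)) :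
    ∃ (ψ : Heis n → ℝ) (σ : ℕ) (C : ℝ),
      Continuous ψ ∧ (∀ q, 0 < ψ q) ∧ DivergenceBound ψ σ C := by
  have hδ := HeisFrame.coercivity_pos (n := n) hk0 hk2
  set δ := HeisFrame.coercivity n k
  have hc : (0 : ℝ) < 4 * n ^ 2 := by have : 0 < n := hn; positivity
  set μ : ℝ := (2 * n - 2 : ℕ) / k
  have hμ : 0 ≤ μ := by positivity
  obtain ⟨σ, hσ⟩ := exists_nat_ge (2 * μ)
  have hmμ : ((2 * n - 2 : ℕ) : ℝ) ≤ 2 * μ := by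
    rw [← mul_div_assoc, le_div_iff₀ hk0, mul_comm]
    gcongr
  obtain ⟨Λ, C, hΛ, hC, hcut⟩ := HeisFrame.exists_isCutoffConstant (s := σ + 6) hδ (by positivity)
  obtain ⟨C', absorb⟩ :=
    HeisFrame.exists_absorb_weight hδ hC (show 0 ≤ (4 * n ^ 2 : ℝ) ^ μ by positivity) hμ hmμ hσ
  have hF (q : Heis n) : (eval q (potF hφ k)).re = Real.exp (k * φ q) / (4 * n ^ 2) := by
    rw [eval_potF, Complex.ofReal_re]
  refine ⟨fun q => δ / 8 * (Real.exp ((2 * n - 2 : ℕ) * φ q) *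
    (Real.exp (k * φ q) / (4 * n ^ 2)) ^ 3), σ + 6, C', ?_, fun q => by positivity, ?_⟩
  · have := hφ.continuous
    fun_prop
  intro h hh r hh0 hh1 hr hr1 hω
  refine ⟨(crFrame n).testField (realFun φ hφ) (potF hφ k) (expFun hφ (2 * n - 2 : ℕ))
    (realFun h hh) σ δ ((Λ * r ^ 2 : ℝ) : ℂ), fun i => ?_, fun q => ?_⟩
  · refine Function.support_subset_iff'.2 fun q hq => eval_testField_of_eq_zero ?_ i
    rw [eval_realFun, Function.notMem_support.1 hq, Complex.ofReal_zero]
  · refine le_trans ?_ <|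
      HeisFrame.le_re_map_div_testField H (φ := eval q) (k := k) (AlgHomClass.commutes _ _) hn hk0
      hk2 hcut hΛ (gradBar_expFun hn) (by rw [hF]; positivity) (eval_expFun hφ _ q) (by positivity)
      (eval_realFun hh q) (hh0 q) hr (hω q)
    beta_reduce
    rw [hF, exp_mul_eq_mul_rpow hk0.ne' hc (2 * n - 2 : ℕ), show 2 * n + 4 = 2 * n - 2 + 6 by lia]
    exact absorb _ (h q) r (by positivity) (hh0 q) (hh1 q) hr hr1

end

section Integration

lemma support_dirDeriv_subset (v : Heis n) (f : SmoothFun n) :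
    Function.support (dirDeriv v f).1 ⊆ tsupport f.1 := by
  refine Function.support_subset_iff'.2 fun q hq => ?_
  change fderiv ℝ f.1 q v = 0
  rw [fderiv_of_notMem_tsupport ℝ hq, _root_.zero_apply]

lemma support_vecZBar_subset (j : Fin n) (f : SmoothFun n) :
    Function.support (vecZBar j f).1 ⊆ tsupport f.1 := by
  refine Function.support_subset_iff'.2 fun q hq => ?_
  have hD (v : Heis n) : eval q (dirDeriv v f) = 0 :=
    Function.support_subset_iff'.1 (support_dirDeriv_subset v f) q hq
  change eval q (vecZBar j f) = 0
  simp only [vecZBar_apply, map_add, map_sub, map_smul, map_mul, hD, smul_zero, mul_zero, add_zero,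
    sub_zero]

lemma integrable_smoothFun {f : SmoothFun n} (hf : HasCompactSupport f.1) :
    Integrable fun q => eval q f :=
  (contDiff_smoothFun f).continuous.integrable_of_hasCompactSupport hf

lemma hasCompactSupport_dirDeriv {f : SmoothFun n} (hf : HasCompactSupport f.1) (v : Heis n) :
    HasCompactSupport (dirDeriv v f).1 :=
  .mono' hf (support_dirDeriv_subset v f)

lemma hasCompactSupport_vecZBar {f : SmoothFun n} (hf : HasCompactSupport f.1) (j : Fin n) :
    HasCompactSupport (vecZBar j f).1 :=
  .mono' hf (support_vecZBar_subset j f)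

lemma integral_dirDeriv {f : SmoothFun n} (hf : HasCompactSupport f.1) (v : Heis n) :
    ∫ q, eval q (dirDeriv v f) = 0 := by
  have hD : Integrable fun q => fderiv ℝ f.1 q v :=
    integrable_smoothFun (hasCompactSupport_dirDeriv hf v)
  have : (volume : Measure (Heis n)).IsAddHaarMeasure := Measure.prod.instIsAddHaarMeasure _ _
  have parts := integral_mul_fderiv_eq_neg_fderiv_mul_of_integrable
    (μ := (volume : Measure (Heis n))) (f := fun _ => (1 : ℂ)) (g := f.1) (v := v) (by simp)
    (by simpa using hD) ((integrable_smoothFun hf).const_mul 1) (by simp)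
    fun q _ => differentiableAt_smoothFun f q
  simpa [eval_dirDeriv] using parts

lemma vecZBar_eq_sum_dirDeriv (j : Fin n) (f : SmoothFun n) : vecZBar j f =
    dirDeriv (dirX j) ((1 / 2 : ℂ) • f) + dirDeriv (dirY j) ((I / 2) • f) -
      dirDeriv dirT (I • (coord j * f)) := by
  simp only [vecZBar_apply, Derivation.map_smul, Derivation.leibniz, dirDeriv_dirT_coord,
    smul_eq_mul, mul_zero, add_zero]
  module

lemma integral_vecZBar {f : SmoothFun n} (hf : HasCompactSupport f.1) (j : Fin n) :
    ∫ q, eval q (vecZBar j f) = 0 := by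
  have hx : HasCompactSupport ((1 / 2 : ℂ) • f).1 := hf.mul_left (f := fun _ => (1 / 2 : ℂ))
  have hy : HasCompactSupport ((I / 2) • f).1 := hf.mul_left (f := fun _ => I / 2)
  have ht : HasCompactSupport (I • (coord j * f)).1 :=
    (hf.mul_left (f := (coord j).1)).mul_left (f := fun _ => I)
  have hix := integrable_smoothFun (hasCompactSupport_dirDeriv hx (dirX j))
  have hiy := integrable_smoothFun (hasCompactSupport_dirDeriv hy (dirY j))
  have hit := integrable_smoothFun (hasCompactSupport_dirDeriv ht dirT)
  simp only [vecZBar_eq_sum_dirDeriv, map_add, map_sub]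
  rw [integral_sub ?_ hit, integral_add hix hiy, integral_dirDeriv hx,
    integral_dirDeriv hy, integral_dirDeriv ht, add_zero, sub_zero]
  exact hix.add hiy

lemma integrable_div {X : Fin n → SmoothFun n} (hX : ∀ i, HasCompactSupport (X i).1) :
    Integrable fun q => eval q ((crFrame n).div X) := by
  simp only [HeisFrame.div, map_sum]
  exact integrable_finsetSum _ fun i _ => integrable_smoothFun (hasCompactSupport_vecZBar (hX i) i)

lemma integral_div {X : Fin n → SmoothFun n} (hX : ∀ i, HasCompactSupport (X i).1) :
    ∫ q, eval q ((crFrame n).div X) = 0 := by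
  simp only [HeisFrame.div, map_sum]
  refine (integral_finsetSum _ fun i _ =>
    integrable_smoothFun (hasCompactSupport_vecZBar (hX i) i)).trans ?_
  exact Finset.sum_eq_zero fun i _ => integral_vecZBar (hX i) i

lemma eval_div_of_notMem {X : Fin n → SmoothFun n} {K : Set (Heis n)} (hK : IsClosed K)
    (hX : ∀ i, Function.support (X i).1 ⊆ K) {q : Heis n} (hq : q ∉ K) :
    eval q ((crFrame n).div X) = 0 := by
  simp only [HeisFrame.div, map_sum]
  exact Finset.sum_eq_zero fun i _ =>
    Function.support_subset_iff'.1 (support_vecZBar_subset i (X i))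
    q fun h => hq (closure_minimal (hX i) hK h)

lemma setIntegral_re_div {X : Fin n → SmoothFun n} {K : Set (Heis n)} (hK : IsCompact K)
    (hX : ∀ i, Function.support (X i).1 ⊆ K) :
    ∫ q in K, (eval q ((crFrame n).div X)).re = 0 := by
  have hXc i : HasCompactSupport (X i).1 := .of_support_subset_isCompact hK (hX i)
  rw [setIntegral_eq_integral_of_forall_compl_eq_zero fun q hq => by
    rw [eval_div_of_notMem hK.isClosed hX hq, Complex.zero_re]]
  exact (integral_re (integrable_div hXc)).trans (by rw [integral_div hXc]; rfl)

end Integration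

section Cutoff

/-- The dilation `dil s` as a continuous linear map. -/
def dilL (s : ℝ) : Heis n →L[ℝ] Heis n :=
  (s • ContinuousLinearMap.fst ℝ (Fin n → ℂ) ℝ).prod
    (s ^ 2 • ContinuousLinearMap.snd ℝ (Fin n → ℂ) ℝ)

lemma coe_dilL (s : ℝ) : ⇑(dilL s : Heis n →L[ℝ] Heis n) = dil s := rfl

lemma dilL_dirX (s : ℝ) (j : Fin n) : dilL s (dirX j) = s • dirX j := by
  simp [dilL, dirX]

lemma dilL_dirY (s : ℝ) (j : Fin n) : dilL s (dirY j) = s • dirY j := by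
  simp [dilL, dirY]

lemma dilL_dirT (s : ℝ) : dilL s (dirT : Heis n) = s ^ 2 • dirT := by
  simp [dilL, dirT]

variable {h : Heis n → ℝ} (hh : ContDiff ℝ (⊤ : ℕ∞) h)

include hh in
lemma contDiff_comp_dil (s : ℝ) : ContDiff ℝ (⊤ : ℕ∞) fun q => h (dil s q) :=
  hh.comp (dilL s).contDiff

include hh in
lemma fderiv_comp_dil (s : ℝ) (q v : Heis n) :
    fderiv ℝ (fun q => h (dil s q)) q v = fderiv ℝ h (dil s q) (dilL s v) :=
  congrArg (· v) ((hh.differentiable (by simp) (dilL s q)).hasFDerivAt.comp q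
    (dilL s).hasFDerivAt).fderiv

lemma eval_vecZBar_comp_dil (s : ℝ) (j : Fin n) (q : Heis n) :
    eval q (vecZBar j (realFun _ (contDiff_comp_dil hh s))) =
      s * eval (dil s q) (vecZBar j (realFun h hh)) := by
  have hz : eval (dil s q) (coord j) = s * eval q (coord j) := rfl
  simp only [vecZBar_apply, map_add, map_sub, map_smul, map_mul, hz, eval_dirDeriv_realFun,
    fderiv_comp_dil hh, dilL_dirX, dilL_dirY, dilL_dirT, smul_eq_mul, Complex.ofReal_mul]
  push_cast
  ring

lemma val_gradBar_comp_dil (s : ℝ) (q : Heis n) :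
    HeisFrame.val (eval q) ((crFrame n).gradBar (realFun _ (contDiff_comp_dil hh s))) =
      (s : ℂ) • HeisFrame.val (eval (dil s q)) ((crFrame n).gradBar (realFun h hh)) := by
  ext j
  exact eval_vecZBar_comp_dil hh s j q

lemma exists_norm_val_gradBar_le (hc : HasCompactSupport h) :
    ∃ B, ∀ q, ‖HeisFrame.val (eval q) ((crFrame n).gradBar (realFun h hh))‖ ≤ B := by
  have hcs : HasCompactSupport (realFun h hh).1 :=
    hc.comp_left (g := fun r : ℝ => (r : ℂ)) Complex.ofReal_zero
  choose B hB using fun j => (hasCompactSupport_vecZBar hcs j).exists_bound_of_continuous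
    (contDiff_smoothFun (vecZBar j (realFun h hh))).continuous
  exact ⟨√(∑ j, B j ^ 2), fun q => by
    rw [EuclideanSpace.norm_eq]
    gcongr with j
    exact hB j q⟩

variable (n) in
/-- The box `|z_j| ≤ ρ`, `|t| ≤ ρ²`, on which the dilations act by scaling `ρ`. -/
def box (ρ : ℝ) : Set (Heis n) := Metric.closedBall 0 ρ ×ˢ Metric.closedBall 0 (ρ ^ 2)

lemma isCompact_box (ρ : ℝ) : IsCompact (box n ρ) :=
  (isCompact_closedBall _ _).prod (isCompact_closedBall _ _)

lemma measurableSet_box (ρ : ℝ) : MeasurableSet (box n ρ) :=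
  (isCompact_box ρ).isClosed.measurableSet

lemma box_subset_box {ρ ρ' : ℝ} (hρ : 0 ≤ ρ) (h : ρ ≤ ρ') : box n ρ ⊆ box n ρ' :=
  Set.prod_mono (Metric.closedBall_subset_closedBall h)
    (Metric.closedBall_subset_closedBall (by gcongr))

lemma dil_inv_mem_box_iff {R : ℝ} (hR : 0 < R) (ρ : ℝ) (q : Heis n) :
    dil R⁻¹ q ∈ box n ρ ↔ q ∈ box n (ρ * R) := by
  have hz : ‖(dil R⁻¹ q).1‖ = R⁻¹ * ‖q.1‖ := by
    rw [← coe_dilL]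
    exact (norm_smul R⁻¹ q.1).trans (by rw [Real.norm_of_nonneg (by positivity)])
  have ht : ‖(dil R⁻¹ q).2‖ = (R ^ 2)⁻¹ * ‖q.2‖ := by
    rw [dil, norm_mul, inv_pow, Real.norm_of_nonneg (by positivity)]
  rw [box, box, Set.mem_prod, Set.mem_prod, mem_closedBall_zero_iff, mem_closedBall_zero_iff,
    mem_closedBall_zero_iff, mem_closedBall_zero_iff, hz, ht, inv_mul_le_iff₀ hR,
    inv_mul_le_iff₀ (by positivity), mul_comm R, mul_pow, mul_comm (R ^ 2)]

variable (n) in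
lemma exists_volume_box_eq : ∃ V : ℝ, ∀ ρ, 0 ≤ ρ →
    (volume : Measure (Heis n)).real (box n ρ) = V * ρ ^ (2 * n + 2) := by
  refine ⟨2 * (volume : Measure (Fin n → ℂ)).real (Metric.closedBall 0 1), fun ρ hρ => ?_⟩
  have hdim : Module.finrank ℝ (Fin n → ℂ) = 2 * n := by
    rw [Module.finrank_pi_fintype]; simp [mul_comm]
  change ((volume : Measure (Fin n → ℂ)).prod (volume : Measure ℝ)).real _ = _
  rw [box, measureReal_prod_prod, measureReal_def, Measure.addHaar_closedBall' _ _ hρ,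
    ENNReal.toReal_mul, ENNReal.toReal_ofReal (by positivity), hdim,
    Real.volume_real_closedBall (by positivity), measureReal_def]
  ring

variable (n) in
lemma exists_cutoff : ∃ B : ℝ, 0 ≤ B ∧ ∀ R, 0 < R → ∃ (h : Heis n → ℝ)
    (hh : ContDiff ℝ (⊤ : ℕ∞) h), (∀ q, 0 ≤ h q) ∧ (∀ q, h q ≤ 1) ∧ (∀ q ∈ box n R, h q = 1) ∧
      Function.support h ⊆ box n (2 * R) ∧
      ∀ q, ‖HeisFrame.val (eval q) ((crFrame n).gradBar (realFun h hh))‖ ≤ B / R := by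
  let b : ContDiffBump (0 : Heis n) := ⟨1, 2, by norm_num, by norm_num⟩
  obtain ⟨B, hB⟩ := exists_norm_val_gradBar_le b.contDiff b.hasCompactSupport
  have one_of_mem (q) (hq : q ∈ box n 1) : b q = 1 := b.one_of_mem_closedBall <| by
    rw [box, one_pow] at hq
    rw [← closedBall_prod_same]
    exact hq
  refine ⟨B, (norm_nonneg _).trans (hB 0), fun R hR => ⟨_, contDiff_comp_dil b.contDiff R⁻¹,
    fun q => b.nonneg, fun q => b.le_one, fun q hq => ?_, fun q hq => ?_, fun q => ?_⟩⟩
  · exact one_of_mem _ ((dil_inv_mem_box_iff hR 1 q).2 (by rwa [one_mul]))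
  · rw [← dil_inv_mem_box_iff hR]
    have hball : dil R⁻¹ q ∈ Metric.ball (0 : Heis n) 2 := b.support_eq ▸ hq
    rw [← ball_prod_same] at hball
    exact ⟨Metric.ball_subset_closedBall hball.1,
      Metric.closedBall_subset_closedBall (by norm_num) (Metric.ball_subset_closedBall hball.2)⟩
  · rw [val_gradBar_comp_dil b.contDiff, norm_smul, Complex.norm_real,
      Real.norm_of_nonneg (inv_nonneg.2 hR.le), inv_mul_eq_div]
    gcongr
    exact hB _

end Cutoff

section Contradiction

variable {ψ : Heis n → ℝ} (hψ : Continuous ψ)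
include hψ

lemma setIntegral_box_pos (hpos : ∀ q, 0 < ψ q) : 0 < ∫ q in box n 1, ψ q := by
  rw [setIntegral_pos_iff_support_of_nonneg_ae (ae_of_all _ fun q => (hpos q).le)
    (hψ.continuousOn.integrableOn_compact (isCompact_box 1)),
    Set.eq_univ_of_forall (s := Function.support ψ) fun q => (hpos q).ne', Set.univ_inter]
  change 0 < ((volume : Measure (Fin n → ℂ)).prod (volume : Measure ℝ)) (box n 1)
  rw [box, Measure.prod_prod]
  exact ENNReal.mul_pos (Metric.measure_closedBall_pos _ _ one_pos).ne'
    (Metric.measure_closedBall_pos _ _ (by norm_num)).ne'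

lemma DivergenceBound.setIntegral_box_le {σ : ℕ} {C : ℝ} (hbound : DivergenceBound ψ σ C)
    (hpos : ∀ q, 0 < ψ q) :
    ∃ M : ℝ, ∀ᶠ R in atTop, ∫ q in box n 1, ψ q ≤ M / R ^ 2 := by
  obtain ⟨B, hB, cutoff⟩ := exists_cutoff n
  obtain ⟨V, hV⟩ := exists_volume_box_eq n
  refine ⟨C * B ^ (2 * n + 4) * V * 2 ^ (2 * n + 2), ?_⟩
  filter_upwards [eventually_ge_atTop 1, eventually_ge_atTop B] with R hR hBR
  have hR0 : 0 < R := one_pos.trans_le hR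
  obtain ⟨h, hh, hh0, hh1, hone, hsupp, hgrad⟩ := cutoff R hR0
  obtain ⟨X, hX, hdiv⟩ := hbound hh hh0 hh1 (by positivity) ((div_le_one hR0).2 hBR) hgrad
  have hcψ : Continuous fun q => ψ q * h q ^ σ := hψ.mul (hh.continuous.pow σ)
  have hcdiv : Continuous fun q => (eval q ((crFrame n).div X)).re :=
    Complex.continuous_re.comp (contDiff_smoothFun ((crFrame n).div X)).continuous
  have integrableOn {g : Heis n → ℝ} (hg : Continuous g) : IntegrableOn g (box n (2 * R)) :=
    hg.continuousOn.integrableOn_compact (isCompact_box _)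
  calc ∫ q in box n 1, ψ q
      = ∫ q in box n 1, ψ q * h q ^ σ := setIntegral_congr_fun (measurableSet_box 1) fun q hq => by
        simp only [hone q (box_subset_box zero_le_one hR hq), one_pow, mul_one]
    _ ≤ ∫ q in box n (2 * R), ψ q * h q ^ σ :=
        setIntegral_mono_set (integrableOn hcψ)
          (ae_of_all _ fun q => mul_nonneg (hpos q).le (pow_nonneg (hh0 q) σ))
          (box_subset_box zero_le_one (by linarith)).eventuallyLE
    _ ≤ ∫ q in box n (2 * R), ((eval q ((crFrame n).div X)).re + C * (B / R) ^ (2 * n + 4)) :=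
        setIntegral_mono (integrableOn hcψ) (integrableOn (hcdiv.add continuous_const))
          fun q => by linarith [hdiv q]
    _ = C * (B / R) ^ (2 * n + 4) * (V * (2 * R) ^ (2 * n + 2)) := by
        rw [integral_add (integrableOn hcdiv) (integrableOn continuous_const),
          setIntegral_re_div (isCompact_box _) fun i => (hX i).trans hsupp, setIntegral_const,
          hV _ (by positivity), zero_add, smul_eq_mul, mul_comm]
    _ = C * B ^ (2 * n + 4) * V * 2 ^ (2 * n + 2) / R ^ 2 := by
        rw [div_pow, mul_pow, show 2 * n + 4 = 2 * n + 2 + 2 by ring, pow_add R]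
        field_simp

theorem not_divergenceBound (hpos : ∀ q, 0 < ψ q) (σ : ℕ) (C : ℝ) : ¬ DivergenceBound ψ σ C := by
  intro hbound
  obtain ⟨M, hM⟩ := hbound.setIntegral_box_le hψ hpos
  have hlim : Tendsto (fun R : ℝ => M / R ^ 2) atTop (𝓝 0) :=
    tendsto_const_nhds.div_atTop (tendsto_pow_atTop two_ne_zero)
  exact (setIntegral_box_pos hψ hpos).not_ge (ge_of_tendsto hlim hM)

end Contradiction

lemma XVec_add_smul_XVec (j : Fin n) (p : Heis n) (s : ℝ) :
    XVec j (p + s • XVec j p) = XVec j p := by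
  simp [XVec]

lemma YVec_add_smul_YVec (j : Fin n) (p : Heis n) (s : ℝ) :
    YVec j (p + s • YVec j p) = YVec j p := by
  simp [YVec]

lemma deriv_deriv_nonneg_of_isLocalMin {g : ℝ → ℝ} {x : ℝ} (hg : ContinuousAt g x)
    (h : IsLocalMin g x) : 0 ≤ deriv (deriv g) x := by
  by_contra! hneg
  have hmax := isLocalMax_of_deriv_deriv_neg hneg h.deriv_eq_zero hg
  have hconst : g =ᶠ[𝓝 x] fun _ => g x := by
    filter_upwards [h, hmax] with y hmin hmax using le_antisymm hmax hmin
  have hzero := hconst.deriv.deriv_eq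
  simp only [deriv_const', deriv_const] at hzero
  exact hneg.ne hzero

lemma deriv_deriv_exp_const_mul {g : ℝ → ℝ} (hg : ContDiff ℝ 2 g) (a x : ℝ) :
    deriv (deriv fun s => Real.exp (a * g s)) x =
      Real.exp (a * g x) * (a * deriv (deriv g) x + a ^ 2 * deriv g x ^ 2) := by
  have hexp (s : ℝ) : HasDerivAt (fun s => Real.exp (a * g s))
      (Real.exp (a * g s) * (a * deriv g s)) s :=
    (((hg.differentiable (by simp)) s).hasDerivAt.const_mul a).exp
  have hg' : HasDerivAt (fun s => a * deriv g s) (a * deriv (deriv g) x) x :=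
    ((hg.differentiable_deriv_two x).hasDerivAt).const_mul a
  rw [funext fun s => (hexp s).deriv]
  refine ((hexp x).mul hg').deriv.trans ?_
  ring

section SecondDerivatives

variable {u v : Heis n → ℝ} (hu : ContDiff ℝ (⊤ : ℕ∞) u) (hv : ContDiff ℝ (⊤ : ℕ∞) v)

include hu

lemma differentiable_comp_line (p v : Heis n) : Differentiable ℝ fun s : ℝ => u (p + s • v) :=
  (hu.differentiable (by simp)).comp (by fun_prop)

lemma deriv_comp_line (p v : Heis n) (s : ℝ) :
    deriv (fun s : ℝ => u (p + s • v)) s = fderiv ℝ u (p + s • v) v := by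
  have hline : HasDerivAt (fun s : ℝ => p + s • v) v s := by
    simpa using ((hasDerivAt_id s).smul_const v).const_add p
  exact ((hu.differentiable (by simp) _).hasFDerivAt.comp_hasDerivAt s hline).deriv

lemma Xop_eq_deriv (j : Fin n) (p : Heis n) :
    Xop j u p = deriv (fun s : ℝ => u (p + s • XVec j p)) 0 := by
  rw [deriv_comp_line hu, zero_smul, add_zero, Xop]

lemma Yop_eq_deriv (j : Fin n) (p : Heis n) :
    Yop j u p = deriv (fun s : ℝ => u (p + s • YVec j p)) 0 := by
  rw [deriv_comp_line hu, zero_smul, add_zero, Yop]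

lemma Xop_Xop_eq_deriv_deriv (j : Fin n) (p : Heis n) :
    Xop j (Xop j u) p = deriv (deriv fun s : ℝ => u (p + s • XVec j p)) 0 := by
  rw [Xop_eq_deriv (contDiff_Xop hu j), funext (deriv_comp_line hu p (XVec j p))]
  simp only [Xop, XVec_add_smul_XVec]

lemma Yop_Yop_eq_deriv_deriv (j : Fin n) (p : Heis n) :
    Yop j (Yop j u) p = deriv (deriv fun s : ℝ => u (p + s • YVec j p)) 0 := by
  rw [Yop_eq_deriv (contDiff_Yop hu j), funext (deriv_comp_line hu p (YVec j p))]
  simp only [Yop, YVec_add_smul_YVec]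

lemma subLap_nonneg_of_isLocalMin {p : Heis n} (h : IsLocalMin u p) : 0 ≤ subLap u p := by
  have hline (v : Heis n) : 0 ≤ deriv (deriv fun s : ℝ => u (p + s • v)) 0 := by
    refine deriv_deriv_nonneg_of_isLocalMin
      (differentiable_comp_line hu p v).continuous.continuousAt ?_
    refine IsLocalMin.comp_continuous (g := fun s : ℝ => p + s • v) (b := 0) ?_ (by fun_prop)
    simpa using h
  refine Finset.sum_nonneg fun j _ => add_nonneg ?_ ?_
  · rw [Xop_Xop_eq_deriv_deriv hu]
    exact hline _
  · rw [Yop_Yop_eq_deriv_deriv hu]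
    exact hline _

lemma subLap_exp_const_mul (a : ℝ) (p : Heis n) :
    subLap (fun q => Real.exp (a * u q)) p =
      Real.exp (a * u p) * (a * subLap u p + a ^ 2 * gradHSq u p) := by
  have hexp : ContDiff ℝ (⊤ : ℕ∞) fun q => Real.exp (a * u q) := (contDiff_const.mul hu).exp
  have hline (v : Heis n) : ContDiff ℝ 2 fun s : ℝ => u (p + s • v) :=
    (contDiff_infty.1 hu 2).comp (by fun_prop)
  simp only [subLap, gradHSq, Finset.mul_sum, ← Finset.sum_add_distrib]
  refine Finset.sum_congr rfl fun j _ => ?_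
  rw [Xop_Xop_eq_deriv_deriv hexp, Yop_Yop_eq_deriv_deriv hexp, Xop_Xop_eq_deriv_deriv hu,
    Yop_Yop_eq_deriv_deriv hu, Xop_eq_deriv hu, Yop_eq_deriv hu,
    deriv_deriv_exp_const_mul (hline _), deriv_deriv_exp_const_mul (hline _)]
  simp only [zero_smul, add_zero]
  ring

include hv

lemma fderiv_add_const_mul_apply (c : ℝ) (p w : Heis n) :
    fderiv ℝ (fun q => u q + c * v q) p w = fderiv ℝ u p w + c * fderiv ℝ v p w := by
  have hv' := hv.differentiable (by simp) p
  rw [fderiv_fun_add (hu.differentiable (by simp) p) (hv'.const_mul c), fderiv_const_mul hv']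
  rfl

lemma subLap_add_const_mul (c : ℝ) (p : Heis n) :
    subLap (fun q => u q + c * v q) p = subLap u p + c * subLap v p := by
  have hX (j : Fin n) : Xop j (fun q => u q + c * v q) = fun q => Xop j u q + c * Xop j v q :=
    funext fun q => fderiv_add_const_mul_apply hu hv c q _
  have hY (j : Fin n) : Yop j (fun q => u q + c * v q) = fun q => Yop j u q + c * Yop j v q :=
    funext fun q => fderiv_add_const_mul_apply hu hv c q _
  simp only [subLap, hX, hY, Finset.mul_sum, ← Finset.sum_add_distrib]
  refine Finset.sum_congr rfl fun j _ => ?_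
  have hXX := fderiv_add_const_mul_apply (contDiff_Xop hu j) (contDiff_Xop hv j) c p (XVec j p)
  have hYY := fderiv_add_const_mul_apply (contDiff_Yop hu j) (contDiff_Yop hv j) c p (YVec j p)
  simp only [Xop, Yop] at hXX hYY ⊢
  rw [hXX, hYY]
  ring

omit hu in
lemma subLap_const_mul (c : ℝ) (p : Heis n) : subLap (fun q => c * v q) p = c * subLap v p := by
  have hX (j : Fin n) : Xop j (fun _ : Heis n => 0) = fun _ => 0 := funext fun q => by simp [Xop]
  have hY (j : Fin n) : Yop j (fun _ : Heis n => 0) = fun _ => 0 := funext fun q => by simp [Yop]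
  simpa [subLap, hX, hY] using subLap_add_const_mul (contDiff_const (c := (0 : ℝ))) hv c p

end SecondDerivatives

/-- The fourth power `|z|⁴ + t²` of the Korányi norm: unlike `korNorm`, it is smooth at the
origin. -/
def gauge (q : Heis n) : ℝ := nsq q.1 ^ 2 + q.2 ^ 2

lemma nsq_nonneg (z : Fin n → ℂ) : 0 ≤ nsq z := Finset.sum_nonneg fun _ _ => normSq_nonneg _

lemma contDiff_nsq_fst : ContDiff ℝ (⊤ : ℕ∞) fun q : Heis n => nsq q.1 := by
  refine ContDiff.sum fun j _ => ?_
  have hcoord := contDiff_smoothFun (coord j)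
  have hre := Complex.reCLM.contDiff.comp hcoord
  have him := Complex.imCLM.contDiff.comp hcoord
  exact (hre.mul hre).add (him.mul him)

lemma contDiff_gauge : ContDiff ℝ (⊤ : ℕ∞) (gauge : Heis n → ℝ) :=
  (contDiff_nsq_fst.pow 2).add (contDiff_snd.pow 2)

lemma nsq_add_smul_single (z : Fin n → ℂ) (j : Fin n) (w : ℂ) (s : ℝ) :
    nsq (z + s • (Pi.single j w : Fin n → ℂ)) =
      nsq z + 2 * ((z j).re * w.re + (z j).im * w.im) * s + normSq w * s ^ 2 := by
  have hterm (i : Fin n) : normSq ((z + s • (Pi.single j w : Fin n → ℂ)) i) = normSq (z i) +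
      if i = j then 2 * ((z j).re * w.re + (z j).im * w.im) * s + normSq w * s ^ 2 else 0 := by
    obtain rfl | hij := eq_or_ne i j
    · simp only [Pi.add_apply, Pi.smul_apply, Pi.single_eq_same, if_true, normSq_apply, add_re,
        add_im, real_smul, re_ofReal_mul, im_ofReal_mul]
      ring
    · simp [hij]
  simp only [nsq, hterm, Finset.sum_add_distrib, Finset.sum_ite_eq', Finset.mem_univ, if_true]
  ring

lemma deriv_quartic (a b c d e : ℝ) :
    deriv (fun s : ℝ => a + b * s + c * s ^ 2 + d * s ^ 3 + e * s ^ 4) =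
      fun s => b + 2 * c * s + 3 * d * s ^ 2 + 4 * e * s ^ 3 := by
  funext s
  have h := ((((hasDerivAt_id s).const_mul b).const_add a).add
    ((hasDerivAt_pow 2 s).const_mul c)).add ((hasDerivAt_pow 3 s).const_mul d) |>.add
    ((hasDerivAt_pow 4 s).const_mul e)
  refine h.deriv.trans ?_
  push_cast
  ring

lemma deriv_quartic_zero (a b c d e : ℝ) :
    deriv (fun s : ℝ => a + b * s + c * s ^ 2 + d * s ^ 3 + e * s ^ 4) 0 = b := by
  simp [deriv_quartic]

lemma deriv_deriv_quartic_zero (a b c d e : ℝ) :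
    deriv (deriv fun s : ℝ => a + b * s + c * s ^ 2 + d * s ^ 3 + e * s ^ 4) 0 = 2 * c := by
  have h := deriv_quartic_zero b (2 * c) (3 * d) (4 * e) 0
  simpa only [deriv_quartic, zero_mul, add_zero] using h

lemma nsq_add_smul_XVec (j : Fin n) (q : Heis n) (s : ℝ) :
    nsq (q + s • XVec j q).1 = nsq q.1 + 2 * (q.1 j).re * s + s ^ 2 := by
  simpa [XVec] using nsq_add_smul_single q.1 j 1 s

lemma nsq_add_smul_YVec (j : Fin n) (q : Heis n) (s : ℝ) :
    nsq (q + s • YVec j q).1 = nsq q.1 + 2 * (q.1 j).im * s + s ^ 2 := by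
  simpa [YVec] using nsq_add_smul_single q.1 j I s

lemma gauge_add_smul_XVec (j : Fin n) (q : Heis n) (s : ℝ) :
    gauge (q + s • XVec j q) = gauge q + (4 * nsq q.1 * (q.1 j).re + 4 * q.2 * (q.1 j).im) * s +
      (4 * normSq (q.1 j) + 2 * nsq q.1) * s ^ 2 + 4 * (q.1 j).re * s ^ 3 + 1 * s ^ 4 := by
  rw [gauge, nsq_add_smul_XVec, gauge, normSq_apply]
  simp only [XVec, Prod.snd_add, Prod.smul_mk, smul_eq_mul]
  ring

lemma gauge_add_smul_YVec (j : Fin n) (q : Heis n) (s : ℝ) :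
    gauge (q + s • YVec j q) = gauge q + (4 * nsq q.1 * (q.1 j).im - 4 * q.2 * (q.1 j).re) * s +
      (4 * normSq (q.1 j) + 2 * nsq q.1) * s ^ 2 + 4 * (q.1 j).im * s ^ 3 + 1 * s ^ 4 := by
  rw [gauge, nsq_add_smul_YVec, gauge, normSq_apply]
  simp only [YVec, Prod.snd_add, Prod.smul_mk, smul_eq_mul]
  ring

lemma subLap_nsq (q : Heis n) : subLap (fun q => nsq q.1) q = 4 * n := by
  have h (a b : ℝ) : deriv (deriv fun s : ℝ => a + b * s + s ^ 2) 0 = 2 := by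
    simpa using deriv_deriv_quartic_zero a b 1 0 0
  simp only [subLap, Xop_Xop_eq_deriv_deriv contDiff_nsq_fst,
    Yop_Yop_eq_deriv_deriv contDiff_nsq_fst, nsq_add_smul_XVec, nsq_add_smul_YVec, h,
    Finset.sum_const, Finset.card_univ, Fintype.card_fin, nsmul_eq_mul]
  ring

lemma subLap_gauge (q : Heis n) : subLap gauge q = 8 * (n + 2) * nsq q.1 := by
  simp only [subLap, Xop_Xop_eq_deriv_deriv contDiff_gauge, Yop_Yop_eq_deriv_deriv contDiff_gauge,
    gauge_add_smul_XVec, gauge_add_smul_YVec, deriv_deriv_quartic_zero]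
  have hterm (x : ℝ) : 2 * (4 * x + 2 * nsq q.1) + 2 * (4 * x + 2 * nsq q.1) =
      16 * x + 8 * nsq q.1 := by ring
  simp only [hterm, Finset.sum_add_distrib, ← Finset.mul_sum, Finset.sum_const, Finset.card_univ,
    Fintype.card_fin, nsmul_eq_mul]
  rw [show ∑ j, normSq (q.1 j) = nsq q.1 from rfl]
  ring

lemma gradHSq_gauge (q : Heis n) : gradHSq gauge q = 16 * nsq q.1 * gauge q := by
  simp only [gradHSq, Xop_eq_deriv contDiff_gauge, Yop_eq_deriv contDiff_gauge,
    gauge_add_smul_XVec, gauge_add_smul_YVec, deriv_quartic_zero]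
  have hterm (j : Fin n) : (4 * nsq q.1 * (q.1 j).re + 4 * q.2 * (q.1 j).im) ^ 2 +
      (4 * nsq q.1 * (q.1 j).im - 4 * q.2 * (q.1 j).re) ^ 2 =
        16 * gauge q * normSq (q.1 j) := by
    rw [gauge, normSq_apply]
    ring
  simp only [hterm, ← Finset.mul_sum]
  rw [show ∑ j, normSq (q.1 j) = nsq q.1 from rfl]
  ring

/-- The function `m e^{-α |q|⁴} + ε |z|²`, in terms of the Korányi norm of `q = (z, t)`: a strict
subsolution of `Δ_H` far from the origin, where `2 α |q|⁴ ≥ n + 2`. The second term makes up for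
the vanishing of `Δ_H (e^{-α |q|⁴})` on the centre `z = 0`. -/
def barrier (m α ε : ℝ) (q : Heis n) : ℝ := m * Real.exp (-α * gauge q) + ε * nsq q.1

lemma contDiff_barrier (m α ε : ℝ) : ContDiff ℝ (⊤ : ℕ∞) (barrier m α ε : Heis n → ℝ) :=
  (contDiff_const.mul (contDiff_exp_mul contDiff_gauge _)).add (contDiff_const.mul contDiff_nsq_fst)

lemma subLap_barrier (m α ε : ℝ) (q : Heis n) : subLap (barrier m α ε) q =
    8 * m * α * nsq q.1 * Real.exp (-α * gauge q) * (2 * α * gauge q - (n + 2)) + 4 * n * ε := by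
  unfold barrier
  rw [
    subLap_add_const_mul (contDiff_const.mul (contDiff_exp_mul contDiff_gauge _)) contDiff_nsq_fst,
    subLap_const_mul (contDiff_exp_mul contDiff_gauge _), subLap_exp_const_mul contDiff_gauge,
    subLap_gauge, gradHSq_gauge, subLap_nsq]
  ring

lemma subLap_barrier_pos (hn : n ≠ 0) {m α ε : ℝ} (hm : 0 ≤ m) (hα : 0 ≤ α) (hε : 0 < ε)
    {q : Heis n} (hq : n + 2 ≤ 2 * α * gauge q) : 0 < subLap (barrier m α ε) q := by
  have := nsq_nonneg q.1
  have : 0 ≤ 2 * α * gauge q - (n + 2) := sub_nonneg.2 hq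
  rw [subLap_barrier]
  positivity

section GaugeBounds

variable {q : Heis n} {a : ℝ} (h : gauge q ≤ a ^ 4)

include h

lemma nsq_le_sq_of_gauge_le : nsq q.1 ≤ a ^ 2 := by
  refine le_of_sq_le_sq ?_ (sq_nonneg a)
  linarith [sq_nonneg q.2, show gauge q = nsq q.1 ^ 2 + q.2 ^ 2 from rfl]

lemma norm_fst_le_of_gauge_le (ha : 0 ≤ a) : ‖q.1‖ ≤ a := by
  refine (pi_norm_le_iff_of_nonneg ha).2 fun j => le_of_sq_le_sq ?_ ha
  rw [← normSq_eq_norm_sq]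
  exact (Finset.single_le_sum (fun i _ => normSq_nonneg (q.1 i)) (Finset.mem_univ j)).trans
    (nsq_le_sq_of_gauge_le h)

lemma norm_snd_le_of_gauge_le : ‖q.2‖ ≤ a ^ 2 := by
  refine abs_le_of_sq_le_sq ?_ (sq_nonneg a)
  linarith [sq_nonneg (nsq q.1), show gauge q = nsq q.1 ^ 2 + q.2 ^ 2 from rfl]

end GaugeBounds

lemma isCompact_gauge_le (a : ℝ) : IsCompact {q : Heis n | gauge q ≤ a ^ 4} := by
  refine Metric.isCompact_of_isClosed_isBounded
    (isClosed_le contDiff_gauge.continuous continuous_const) ?_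
  refine (Metric.isBounded_closedBall (x := (0 : Heis n)) (r := max |a| (a ^ 2))).subset ?_
  intro q (hq : gauge q ≤ a ^ 4)
  rw [mem_closedBall_zero_iff]
  exact max_le_max (norm_fst_le_of_gauge_le (by rwa [pow_abs, abs_of_nonneg (by positivity)])
    (abs_nonneg a)) (norm_snd_le_of_gauge_le hq)

lemma exists_forall_gauge_le_of_eventually {P : Heis n → Prop} (hP : ∀ᶠ q in 𝓝 0, P q) :
    ∃ ρ, 0 < ρ ∧ ∀ q, gauge q ≤ ρ → P q := by
  obtain ⟨δ, hδ, hball⟩ := Metric.eventually_nhds_iff.1 hP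
  obtain ⟨a, ha, haδ⟩ := exists_between (lt_min hδ one_pos)
  refine ⟨a ^ 4, by positivity, fun q hq => hball ?_⟩
  rw [dist_zero_right]
  have ha1 : a ^ 2 ≤ a := pow_le_of_le_one ha.le (haδ.le.trans (min_le_right _ _)) two_ne_zero
  exact (max_le (norm_fst_le_of_gauge_le hq ha.le)
    ((norm_snd_le_of_gauge_le hq).trans ha1)).trans_lt
    (haδ.trans_le (min_le_left _ _))

/-- The closed annulus `ρ ≤ |q|⁴ ≤ a⁴` in the Korányi norm. -/
def annulus (n : ℕ) (ρ a : ℝ) : Set (Heis n) := {q | ρ ≤ gauge q ∧ gauge q ≤ a ^ 4}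

lemma isCompact_annulus (ρ a : ℝ) : IsCompact (annulus n ρ a) :=
  (isCompact_gauge_le a).inter_left (isClosed_le continuous_const contDiff_gauge.continuous)

lemma annulus_mem_nhds {ρ a : ℝ} {q : Heis n} (hρ : ρ < gauge q) (ha : gauge q < a ^ 4) :
    annulus n ρ a ∈ 𝓝 q :=
  have hgauge := contDiff_gauge.continuous.continuousAt
  (hgauge.eventually_const_le hρ).and (hgauge.eventually_le_const ha)

section StrongMaximumPrinciple

variable {v : Heis n → ℝ} (hv : ContDiff ℝ (⊤ : ℕ∞) v) (hsuper : ∀ q, subLap v q ≤ 0)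
  (hnonneg : ∀ q, 0 ≤ v q) (hn : n ≠ 0)

include hv hsuper hnonneg hn

lemma barrier_le_of_mem_annulus {m α ε ρ a : ℝ} (hm : 0 ≤ m) (hα : 0 ≤ α) (hε : 0 < ε)
    (hρ : n + 2 ≤ 2 * α * ρ) (hinner : ∀ q, gauge q ≤ ρ → m ≤ v q) {q : Heis n}
    (hq : q ∈ annulus n ρ a) :
    barrier m α ε q ≤ v q + m * Real.exp (-α * a ^ 4) + ε * a ^ 2 := by
  have hdiff : ContDiff ℝ (⊤ : ℕ∞) fun x => v x + -1 * barrier m α ε x :=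
    hv.add (contDiff_const.mul (contDiff_barrier m α ε))
  obtain ⟨x, hx, hmin⟩ :=
    (isCompact_annulus ρ a).exists_isMinOn ⟨q, hq⟩ hdiff.continuous.continuousOn
  suffices m * Real.exp (-α * gauge x) ≤ v x + m * Real.exp (-α * a ^ 4) by
    have hxq : v x + -1 * barrier m α ε x ≤ v q + -1 * barrier m α ε q := hmin hq
    have hnsq := mul_le_mul_of_nonneg_left (nsq_le_sq_of_gauge_le hx.2) hε.le
    rw [show barrier m α ε x = m * Real.exp (-α * gauge x) + ε * nsq x.1 from rfl] at hxq
    linarith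
  obtain hinn | hinn := hx.1.eq_or_lt
  · have hexp : Real.exp (-α * gauge x) ≤ 1 := by
      rw [Real.exp_le_one_iff, neg_mul, neg_nonpos]
      exact mul_nonneg hα (by unfold gauge; positivity)
    have hle := mul_le_of_le_one_right hm hexp
    have hpos : 0 ≤ m * Real.exp (-α * a ^ 4) := by positivity
    linarith [hinner x hinn.ge]
  obtain hout | hout := hx.2.eq_or_lt
  · rw [hout]
    linarith [hnonneg x]
  have hlap := subLap_nonneg_of_isLocalMin hdiff (hmin.isLocalMin (annulus_mem_nhds hinn hout))
  rw [subLap_add_const_mul hv (contDiff_barrier m α ε)] at hlap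
  have hfar : n + 2 ≤ 2 * α * gauge x := hρ.trans (by gcongr)
  linarith [hsuper x, subLap_barrier_pos hn hm hα hε hfar]

lemma pos_of_pos_zero (hzero : 0 < v 0) (q : Heis n) : 0 < v q := by
  obtain ⟨m, hm, hm0⟩ := exists_between hzero
  obtain ⟨ρ, hρ, hinner⟩ := exists_forall_gauge_le_of_eventually
    (hv.continuous.continuousAt.eventually_const_le hm0)
  by_cases hq : gauge q ≤ ρ
  · exact hm.trans_le (hinner q hq)
  obtain ⟨a, ha0, ha⟩ : ∃ a : ℝ, 0 < a ∧ gauge q < a ^ 4 :=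
    ((eventually_gt_atTop 0).and
      ((tendsto_pow_atTop four_ne_zero).eventually_gt_atTop (gauge q))).exists
  have hα : 0 < (n + 2) / (2 * ρ) := by positivity
  set α := (n + 2) / (2 * ρ) with hαdef
  have hαρ : n + 2 ≤ 2 * α * ρ := by
    rw [hαdef]
    field_simp
    rfl
  have hbound : m * Real.exp (-α * gauge q) ≤ v q + m * Real.exp (-α * a ^ 4) := by
    refine le_of_forall_pos_le_add fun ε hε => ?_
    have hle := barrier_le_of_mem_annulus hv hsuper hnonneg hn hm.le hα.le
      (div_pos hε (pow_pos ha0 2)) hαρ hinner (a := a) ⟨(not_le.1 hq).le, ha.le⟩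
    rw [div_mul_cancel₀ _ (by positivity)] at hle
    refine le_trans (le_add_of_nonneg_right ?_) hle
    exact mul_nonneg (by positivity) (nsq_nonneg q.1)
  have hexp : m * Real.exp (-α * a ^ 4) < m * Real.exp (-α * gauge q) :=
    mul_lt_mul_of_pos_left (Real.exp_lt_exp.2 (mul_lt_mul_of_neg_left ha (neg_neg_of_pos hα))) hm
  linarith

end StrongMaximumPrinciple

/-- The differential of the left translation by `b`, as a continuous linear map: left translation
is affine and its differential is the same at every point. -/
def hmulLinear (b : Heis n) : Heis n →L[ℝ] Heis n :=
  (ContinuousLinearMap.fst ℝ (Fin n → ℂ) ℝ).prod (ContinuousLinearMap.snd ℝ (Fin n → ℂ) ℝ +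
    (2 : ℝ) • ∑ j, ((b.1 j).im • Complex.reCLM - (b.1 j).re • Complex.imCLM).comp
      ((ContinuousLinearMap.proj (R := ℝ) (φ := fun _ : Fin n => ℂ) j).comp
        (ContinuousLinearMap.fst ℝ (Fin n → ℂ) ℝ)))

lemma hmulLinear_apply (b q : Heis n) :
    hmulLinear b q = (q.1, q.2 + 2 * (hermInner b.1 q.1).im) := by
  simp [hmulLinear, hermInner, im_sum, sub_eq_add_neg, add_comm]

lemma hmul_eq_add_hmulLinear (b q : Heis n) : hmul b q = b + hmulLinear b q := by
  rw [hmulLinear_apply, hmul, add_assoc]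
  rfl

lemma hasFDerivAt_hmul (b q : Heis n) : HasFDerivAt (hmul b) (hmulLinear b) q := by
  rw [funext (hmul_eq_add_hmulLinear b)]
  exact (hmulLinear b).hasFDerivAt.const_add b

lemma contDiff_hmul (b : Heis n) : ContDiff ℝ (⊤ : ℕ∞) (hmul b) := by
  rw [funext (hmul_eq_add_hmulLinear b)]
  exact contDiff_const.add (hmulLinear b).contDiff

lemma hermInner_single (z : Fin n → ℂ) (j : Fin n) (w : ℂ) :
    hermInner z (Pi.single j w) = z j * (starRingEnd ℂ) w := by
  rw [hermInner, Finset.sum_eq_single j (fun i _ hij => by simp [hij]) (by simp),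
    Pi.single_eq_same]

lemma hmulLinear_XVec (b q : Heis n) (j : Fin n) : hmulLinear b (XVec j q) = XVec j (hmul b q) := by
  rw [hmulLinear_apply]
  ext1
  · rfl
  · simp only [XVec, hmul, hermInner_single, map_one, mul_one, Pi.add_apply, add_im]
    ring

lemma hmulLinear_YVec (b q : Heis n) (j : Fin n) : hmulLinear b (YVec j q) = YVec j (hmul b q) := by
  rw [hmulLinear_apply]
  ext1
  · rfl
  · simp only [YVec, hmul, hermInner_single, conj_I, mul_neg, neg_im, mul_I_im, Pi.add_apply,
      add_re]
    ring

lemma hmul_hmul_hinv (b q : Heis n) : hmul b (hmul (hinv b) q) = q := by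
  have hself : (hermInner b.1 b.1).im = 0 := by simp [hermInner, mul_conj]
  ext1
  · simp [hmul, hinv]
  · have hadd : hermInner b.1 (-b.1 + q.1) = -hermInner b.1 b.1 + hermInner b.1 q.1 := by
      simp [hermInner, mul_add, Finset.sum_add_distrib]
    have hneg : hermInner (-b.1) q.1 = -hermInner b.1 q.1 := by simp [hermInner]
    simp only [hmul, hinv, hadd, hneg, add_im, neg_im, hself]
    ring

lemma hmul_zero (b : Heis n) : hmul b 0 = b := by
  simp [hmul, hermInner]

section LeftInvariance

variable {u : Heis n → ℝ} (hu : ContDiff ℝ (⊤ : ℕ∞) u)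

include hu

lemma fderiv_comp_hmul_apply (b q w : Heis n) :
    fderiv ℝ (fun x => u (hmul b x)) q w = fderiv ℝ u (hmul b q) (hmulLinear b w) :=
  congrArg (· w) ((hu.differentiable (by simp) _).hasFDerivAt.comp q (hasFDerivAt_hmul b q)).fderiv

lemma Xop_comp_hmul (b : Heis n) (j : Fin n) :
    Xop j (fun x => u (hmul b x)) = fun x => Xop j u (hmul b x) := by
  funext q
  rw [Xop, fderiv_comp_hmul_apply hu, hmulLinear_XVec, Xop]

lemma Yop_comp_hmul (b : Heis n) (j : Fin n) :
    Yop j (fun x => u (hmul b x)) = fun x => Yop j u (hmul b x) := by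
  funext q
  rw [Yop, fderiv_comp_hmul_apply hu, hmulLinear_YVec, Yop]

lemma subLap_comp_hmul (b q : Heis n) :
    subLap (fun x => u (hmul b x)) q = subLap u (hmul b q) := by
  simp only [subLap, Xop_comp_hmul hu, Yop_comp_hmul hu, Xop_comp_hmul (contDiff_Xop hu _),
    Yop_comp_hmul (contDiff_Yop hu _)]

lemma pos_of_subLap_nonpos (hn : n ≠ 0) (hsuper : ∀ q, subLap u q ≤ 0) (hnonneg : ∀ q, 0 ≤ u q)
    {b : Heis n} (hb : 0 < u b) (q : Heis n) : 0 < u q := by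
  have hpos := pos_of_pos_zero (hu.comp (contDiff_hmul b))
    (fun x => (subLap_comp_hmul hu b x).trans_le (hsuper _)) (fun x => hnonneg _) hn
    (by simpa only [Function.comp_apply, hmul_zero] using hb) (hmul (hinv b) q)
  rwa [Function.comp_apply, hmul_hmul_hinv] at hpos

end LeftInvariance

theorem not_exists_pos_of_neg_subLap_eq_rpow (hn : 1 ≤ n) {p : ℝ} (hp : 1 < p)
    (hsub : n * (p - 1) < 2) :
    ¬ ∃ u : Heis n → ℝ, ContDiff ℝ (⊤ : ℕ∞) u ∧ (∀ q, 0 < u q) ∧ ∀ q, -subLap u q = u q ^ p := by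
  rintro ⟨u, hu, hpos, heq⟩
  have hn0 : (n : ℝ) ≠ 0 := by positivity
  let φ (q : Heis n) : ℝ := Real.log (u q) / n
  have hφ : ContDiff ℝ (⊤ : ℕ∞) φ := (hu.log fun q => (hpos q).ne').div_const _
  have huφ : (fun q => Real.exp (n * φ q)) = u := funext fun q => by
    rw [mul_div_cancel₀ _ hn0, Real.exp_log (hpos q)]
  have hsol := isLogSolution_of_subLap_exp hφ (p := p) (by lia) fun q => by
    rw [huφ, congrFun huφ q, heq]
  obtain ⟨ψ, σ, C, hψ, hψpos, hbound⟩ :=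
    exists_divergenceBound hn (mul_pos (by positivity) (sub_pos.2 hp)) hsub (mod_cast hsol)
  exact not_divergenceBound hψ hψpos σ C hbound

end Heis

/-- Liouville theorem in the subcritical case (Ma–Ou). -/
theorem subcritical_liouville (n : ℕ) (hn : 1 ≤ n) (Q p : ℝ) (hQ : Q = 2 * n + 2)
    (hp1 : 1 < p) (hp2 : p < (Q + 2) / (Q - 2)) :
    (¬ ∃ u : Heis n → ℝ, ContDiff ℝ (⊤ : ℕ∞) u ∧ (∀ q, 0 < u q) ∧
      ∀ q, -subLap u q = u q ^ p) ∧
    (∀ u : Heis n → ℝ, ContDiff ℝ (⊤ : ℕ∞) u → (∀ q, 0 ≤ u q) →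
      (∀ q, -subLap u q = u q ^ p) → ∀ q, u q = 0) := by
  have hn' : (1 : ℝ) ≤ n := by exact_mod_cast hn
  have hsub : n * (p - 1) < 2 := by
    rw [hQ, lt_div_iff₀ (by linarith)] at hp2
    linarith
  have hpositive := not_exists_pos_of_neg_subLap_eq_rpow hn hp1 hsub
  refine ⟨hpositive, fun u hu hnonneg heq => ?_⟩
  have hsuper (q : Heis n) : subLap u q ≤ 0 := by
    linarith [heq q, Real.rpow_nonneg (hnonneg q) p]
  by_contra! hne
  obtain ⟨b, hb⟩ := hne
  have hpos := pos_of_subLap_nonpos hu (by lia) hsuper hnonneg ((hnonneg b).lt_of_ne' hb)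
  exact hpositive ⟨u, hu, hpos, heq⟩
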